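/- arXiv:1308.3284 — 4 statements merged into one kernel-verified Lean document; each statement's English description precedes it below -/
import Mathlib

section
/- Let p, q ∈ ℂ[z] be coprime polynomials with W := p′q − pq′ ≠ 0 (so the rational function p/q is nonconstant), and suppose every complex root of W is real. Then there exist a, b, c, d ∈ ℂ with ad − bc ≠ 0 such that both polynomials a·p + b·q and c·p + d·q have all coefficients real; i.e., the rational function p/q becomes a quotient of real polynomials after composing with a Möbius transformation of the target. [Theorem of Eremenko–Gabrielov: a rational function with only real critical points is essentially a quotient of real polynomials; the case min{k,n−k} = 2 of the Shapiro Conjecture.] -/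
section RealRationalFunctions

open Finset

theorem prod_add_mul_eq_of_cube_zero {κ A : Type*} [DecidableEq κ] [CommRing A]
    (s : Finset κ) (L e : κ → A) (ε y : A) (hε : ε ^ 2 = -2 * y) (hy : ε * y = 0) :
    ∏ k ∈ s, (L k + ε * e k) = ∏ k ∈ s, L k + ε * ∑ k ∈ s, e k * ∏ l ∈ s.erase k, L l
      - y * ∑ k ∈ s, ∑ l ∈ s.erase k, e k * e l * ∏ m ∈ (s.erase k).erase l, L m := by
  induction s using Finset.induction_on with
  | empty => simp
  | insert a s ha ih =>
    have hne : ∀ k ∈ s, a ≠ k := fun k hk h => ha (h ▸ hk)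
    have h1 : ∑ k ∈ insert a s, e k * ∏ l ∈ (insert a s).erase k, L l =
        e a * ∏ l ∈ s, L l + L a * ∑ k ∈ s, e k * ∏ l ∈ s.erase k, L l := by
      rw [sum_insert ha, erase_insert ha, mul_sum]
      congr 1
      refine sum_congr rfl fun k hk => ?_
      rw [erase_insert_of_ne (hne k hk), prod_insert (by simp [ha])]
      ring
    have h2 : ∑ k ∈ insert a s, ∑ l ∈ (insert a s).erase k,
          e k * e l * ∏ m ∈ ((insert a s).erase k).erase l, L m =
        2 * e a * ∑ k ∈ s, e k * ∏ l ∈ s.erase k, L l +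
        L a * ∑ k ∈ s, ∑ l ∈ s.erase k, e k * e l * ∏ m ∈ (s.erase k).erase l, L m := by
      rw [sum_insert ha, erase_insert ha]
      have : ∀ k ∈ s, ∑ l ∈ (insert a s).erase k,
          e k * e l * ∏ m ∈ ((insert a s).erase k).erase l, L m =
          e a * (e k * ∏ l ∈ s.erase k, L l) +
          L a * ∑ l ∈ s.erase k, e k * e l * ∏ m ∈ (s.erase k).erase l, L m := by
        intro k hk
        rw [erase_insert_of_ne (hne k hk), sum_insert (by simp [ha]),
          erase_insert (by simp [ha]), mul_sum]
        congr 1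
        · ring
        · refine sum_congr rfl fun l hl => ?_
          rw [erase_insert_of_ne (hne l (mem_of_mem_erase hl)), prod_insert (by simp [ha])]
          ring
      rw [sum_congr rfl this, sum_add_distrib, ← mul_sum, ← mul_sum]
      simp only [mul_assoc, ← mul_sum]
      ring
    rw [h1, h2, prod_insert ha, prod_insert ha, ih]
    linear_combination (e a * ∑ k ∈ s, e k * ∏ l ∈ s.erase k, L l) * hε
      - (e a * ∑ k ∈ s, ∑ l ∈ s.erase k, e k * e l * ∏ m ∈ (s.erase k).erase l, L m) * hy

/-- The Bethe ansatz: at a solution of the Bethe equations, the product of the linear forms `L k`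
is an eigenvector of the Gaudin operator acting by exchanging the variables `x i`. -/
theorem sum_swap_bethe {ι κ K A : Type*} [Fintype ι] [Fintype κ] [DecidableEq κ] [Field K]
    [CommRing A] [Algebra K A] (z : ι → K) (t : κ → K) (u : K) (x : ι → A)
    (hx : ∀ i, x i ^ 2 = 0) (ht : Function.Injective t) (htz : ∀ k i, t k ≠ z i)
    (huz : ∀ i, u ≠ z i) (hut : ∀ k, u ≠ t k)
    (bethe : ∀ k, ∑ i, (t k - z i)⁻¹ = 2 * ∑ l ∈ univ.erase k, (t k - t l)⁻¹)
    (L : κ → A) (hL : ∀ k, L k = ∑ i, algebraMap K A (t k - z i)⁻¹ * x i) :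
    ∑ i, ∑ j, algebraMap K A ((u - z i)⁻¹ * (u - z j)⁻¹) *
      (∏ k, L k - ∏ k, (L k + (x i - x j) *
        algebraMap K A ((t k - z j)⁻¹ - (t k - z i)⁻¹))) =
    algebraMap K A (2 * ((∑ i, (u - z i)⁻¹) * (∑ k, (u - t k)⁻¹)
      - ∑ k, (u - t k)⁻¹ * ∑ l ∈ univ.erase k, (u - t l)⁻¹)) * ∏ k, L k := by
  set f := algebraMap K A with hf
  set d : ι → K := fun i => (u - z i)⁻¹ with hd
  set c : κ → ι → K := fun k i => (t k - z i)⁻¹ with hc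
  set r : κ → K := fun k => (u - t k)⁻¹ with hr
  set M : A := ∑ i, f (d i) * x i with hM
  set w : K := ∑ i, d i with hw
  have hcd : ∀ k i, c k i * d i = r k * (c k i - d i) := by
    intro k i
    have h1 := sub_ne_zero.2 (htz k i)
    have h2 := sub_ne_zero.2 (huz i)
    have h3 := sub_ne_zero.2 (hut k)
    simp only [hc, hd, hr]
    field_simp
    ring
  have hN : ∀ k, ∑ i, f (c k i * d i) * x i = f (r k) * (L k - M) := by
    intro k
    rw [hL, hM, ← sum_sub_distrib, mul_sum]
    refine sum_congr rfl fun i _ => ?_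
    rw [hcd]; simp only [map_mul, map_sub]; ring
  have hwk : ∀ k, ∑ i, c k i * d i = r k * ((∑ i, c k i) - w) := by
    intro k
    rw [hw, ← sum_sub_distrib, mul_sum]
    exact sum_congr rfl fun i _ => hcd k i
  have hA : ∀ k, ∑ i, ∑ j, f (d i * d j) * ((x i - x j) * f (c k j - c k i)) =
      2 * f (r k) * (M * f (∑ i, c k i) - f w * L k) := by
    intro k
    have : ∑ i, ∑ j, f (d i * d j) * ((x i - x j) * f (c k j - c k i)) =
        2 * (M * f (∑ i, c k i * d i) - (∑ i, f (c k i * d i) * x i) * f w) := by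
      have e : ∀ i j, f (d i * d j) * ((x i - x j) * f (c k j - c k i)) =
        (f (d i) * x i) * f (c k j * d j) - (f (c k i * d i) * x i) * f (d j)
        + (f (c k i * d i)) * (f (d j) * x j) - f (d i) * (f (c k j * d j) * x j) := by
        intro i j; simp only [map_mul, map_sub]; ring
      simp only [e, sum_add_distrib, sum_sub_distrib, ← sum_mul_sum, ← map_sum]
      rw [← hM, ← hw]; ring
    rw [this, hN, hwk]
    simp only [map_mul, map_sub]; ring
  have hB : ∀ k l, k ≠ l → ∑ i, ∑ j, f (d i * d j) *
      (x i * x j * (f (c k j - c k i) * f (c l j - c l i))) =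
      2 * (M * L k * f ((t l - t k)⁻¹ * r l) + M * L l * f ((t k - t l)⁻¹ * r k)
        - f (r k * r l) * (L k * L l)) := by
    intro k l hkl
    have hkl1 : t k - t l ≠ 0 := sub_ne_zero.2 (ht.ne hkl)
    have hkl2 : t l - t k ≠ 0 := sub_ne_zero.2 (ht.ne hkl.symm)
    have hcc : ∑ i, f (c k i * c l i * d i) * x i =
        f (t l - t k)⁻¹ * (f (r k) * (L k - M) - f (r l) * (L l - M)) := by
      rw [← hN, ← hN, ← sum_sub_distrib, mul_sum]
      refine sum_congr rfl fun i _ => ?_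
      have : c k i * c l i = (t l - t k)⁻¹ * (c k i - c l i) := by
        have h1 := sub_ne_zero.2 (htz k i)
        have h2 := sub_ne_zero.2 (htz l i)
        simp only [hc]
        field_simp
        ring
      rw [this]; simp only [map_mul, map_sub]; ring
    have : ∑ i, ∑ j, f (d i * d j) *
        (x i * x j * (f (c k j - c k i) * f (c l j - c l i))) =
        2 * (M * (∑ i, f (c k i * c l i * d i) * x i) -
          (∑ i, f (c k i * d i) * x i) * (∑ i, f (c l i * d i) * x i)) := by
      have e : ∀ i j, f (d i * d j) * (x i * x j * (f (c k j - c k i) * f (c l j - c l i))) =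
        (f (d i) * x i) * (f (c k j * c l j * d j) * x j)
        - (f (c k i * d i) * x i) * (f (c l j * d j) * x j)
        - (f (c l i * d i) * x i) * (f (c k j * d j) * x j)
        + (f (c k i * c l i * d i) * x i) * (f (d j) * x j) := by
        intro i j; simp only [map_mul, map_sub]; ring
      simp only [e, sum_add_distrib, sum_sub_distrib, ← sum_mul_sum]
      rw [← hM]; ring
    rw [this, hcc, hN, hN]
    have e1 : (t l - t k)⁻¹ * r k + r k * r l = (t l - t k)⁻¹ * r l := by
      have h1 := sub_ne_zero.2 (hut k)
      have h2 := sub_ne_zero.2 (hut l)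
      simp only [hr]
      field_simp
      ring
    have e2 : (t k - t l)⁻¹ = - (t l - t k)⁻¹ := by rw [← neg_sub, inv_neg]
    have e1' := congrArg f e1
    rw [e2]
    simp only [map_mul, map_add, map_neg] at e1' ⊢
    linear_combination (2 * M * L k + 2 * M * L l - 2 * M ^ 2) * e1'
  have hexp : ∀ i j, ∏ k, L k - ∏ k, (L k + (x i - x j) * f (c k j - c k i)) =
      ∑ k, ∑ l ∈ univ.erase k, x i * x j * (f (c k j - c k i) * f (c l j - c l i)) *
        ∏ m ∈ (univ.erase k).erase l, L m -
      ∑ k, (x i - x j) * f (c k j - c k i) * ∏ l ∈ univ.erase k, L l := by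
    intro i j
    rw [prod_add_mul_eq_of_cube_zero univ L (fun k => f (c k j - c k i)) (x i - x j) (x i * x j)
      (by linear_combination hx i + hx j)
      (by linear_combination x j * hx i - x i * hx j)]
    simp only [mul_sum, mul_assoc]
    ring
  have hP1 : ∀ k, L k * ∏ l ∈ univ.erase k, L l = ∏ l, L l := fun k =>
    mul_prod_erase univ L (mem_univ k)
  have hP2 : ∀ k, ∀ l ∈ univ.erase k,
      L l * ∏ m ∈ (univ.erase k).erase l, L m = ∏ m ∈ univ.erase k, L m := fun k l hl =>
    mul_prod_erase _ L hl
  have hP3 : ∀ k, ∀ l ∈ univ.erase k,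
      L k * ∏ m ∈ (univ.erase k).erase l, L m = ∏ m ∈ univ.erase l, L m := fun k l hl => by
    rw [erase_right_comm]
    exact mul_prod_erase _ L (by simpa using (ne_of_mem_erase hl).symm)
  calc _ = ∑ k, ∑ l ∈ univ.erase k, (∑ i, ∑ j, f (d i * d j) *
          (x i * x j * (f (c k j - c k i) * f (c l j - c l i)))) *
          ∏ m ∈ (univ.erase k).erase l, L m -
        ∑ k, (∑ i, ∑ j, f (d i * d j) * ((x i - x j) * f (c k j - c k i))) *
          ∏ l ∈ univ.erase k, L l := by
        rw [sum_congr rfl fun i _ => sum_congr rfl fun j _ => congrArg _ (hexp i j)]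
        simp only [← Fintype.sum_prod_type', mul_sub, sum_sub_distrib]
        congr 1
        · simp only [mul_sum, sum_mul]
          rw [sum_comm]
          refine sum_congr rfl fun k _ => ?_
          rw [sum_comm]
          simp only [mul_assoc]
          rfl
        · simp only [mul_sum, sum_mul]
          rw [sum_comm]
          simp only [mul_assoc]
          rfl
    _ = ∑ k, ∑ l ∈ univ.erase k,
          (2 * M * f ((t l - t k)⁻¹ * r l) * ∏ m ∈ univ.erase l, L m +
           2 * M * f ((t k - t l)⁻¹ * r k) * ∏ m ∈ univ.erase k, L m -
           2 * f (r k * r l) * ∏ m, L m) -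
        ∑ k, (2 * f (r k) * M * f (∑ i, c k i) * ∏ l ∈ univ.erase k, L l -
          2 * f (r k) * f w * ∏ m, L m) := by
        congr 1
        · refine sum_congr rfl fun k _ => sum_congr rfl fun l hl => ?_
          rw [hB k l (ne_of_mem_erase hl).symm, ← hP1 k, ← hP2 k l hl, ← hP3 k l hl]
          ring
        · refine sum_congr rfl fun k _ => ?_
          rw [hA, ← hP1 k]
          ring
    _ = _ := by
        have hswap : ∑ k, ∑ l ∈ univ.erase k,
              2 * M * f ((t l - t k)⁻¹ * r l) * ∏ m ∈ univ.erase l, L m =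
            ∑ k, ∑ l ∈ univ.erase k,
              2 * M * f ((t k - t l)⁻¹ * r k) * ∏ m ∈ univ.erase k, L m :=
          sum_comm' (by simp [ne_comm])
        simp only [sum_add_distrib, sum_sub_distrib]
        rw [hswap]
        have hb : ∀ k, f (∑ i, c k i) = 2 * ∑ l ∈ univ.erase k, f (t k - t l)⁻¹ := by
          intro k
          rw [← map_sum, ← map_ofNat f 2, ← map_mul]
          exact congrArg f (bethe k)
        have h3 : ∑ k, 2 * f (r k) * M * f (∑ i, c k i) * ∏ l ∈ univ.erase k, L l =
            2 * ∑ k, ∑ l ∈ univ.erase k,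
              2 * M * f ((t k - t l)⁻¹ * r k) * ∏ m ∈ univ.erase k, L m := by
          rw [mul_sum]
          refine sum_congr rfl fun k _ => ?_
          rw [hb]
          simp only [mul_sum, sum_mul, map_mul]
          exact sum_congr rfl fun l _ => by ring
        have h2 : ∑ k, ∑ l ∈ univ.erase k, 2 * f (r k * r l) * ∏ m, L m =
            2 * f (∑ k, r k * ∑ l ∈ univ.erase k, r l) * ∏ m, L m := by
          simp only [map_sum, mul_sum, sum_mul]
        have h4 : ∑ k, 2 * f (r k) * f w * ∏ m, L m = 2 * f w * f (∑ k, r k) * ∏ m, L m := by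
          simp only [map_sum, mul_sum, sum_mul]
          exact sum_congr rfl fun l _ => by ring
        rw [h3, h2, h4]
        simp only [map_mul, map_sub, map_ofNat]
        ring

/-- The exponent of the squarefree monomial `∏ i ∈ I, X i`. -/
noncomputable def squarefreeExponent {ι : Type*} (I : Finset ι) : ι →₀ ℕ :=
  ∑ i ∈ I, Finsupp.single i 1

theorem squarefreeExponent_apply {ι : Type*} [DecidableEq ι] (I : Finset ι) (i : ι) :
    squarefreeExponent I i = if i ∈ I then 1 else 0 := by
  simp [squarefreeExponent, Finsupp.finsetSum_apply, Finsupp.single_apply]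

theorem mapDomain_squarefreeExponent {ι : Type*} (σ : Equiv.Perm ι) (I : Finset ι) :
    Finsupp.mapDomain σ (squarefreeExponent I) = squarefreeExponent (I.map σ.toEmbedding) := by
  simp [squarefreeExponent, Finsupp.mapDomain_finsetSum, Finsupp.mapDomain_single]

theorem squarefreeExponent_sub_single {ι : Type*} [DecidableEq ι] (I : Finset ι) (i : ι) :
    squarefreeExponent I - Finsupp.single i 1 = squarefreeExponent (I.erase i) := by
  ext j
  simp only [Finsupp.coe_tsub, Pi.sub_apply, squarefreeExponent_apply, Finsupp.single_apply,
    mem_erase]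
  by_cases h : i = j <;> by_cases hj : j ∈ I <;> simp [h, hj, eq_comm]

/-- The ideal generated by the squares of the variables. -/
noncomputable def squareIdeal (ι K : Type*) [CommRing K] : Ideal (MvPolynomial ι K) :=
  Ideal.span ((fun s => MvPolynomial.monomial s 1) '' Set.range fun i => Finsupp.single i 2)

theorem X_sq_mem_squareIdeal {ι K : Type*} [CommRing K] (i : ι) :
    (MvPolynomial.X i : MvPolynomial ι K) ^ 2 ∈ squareIdeal ι K :=
  Ideal.subset_span ⟨_, ⟨i, rfl⟩, by simp [MvPolynomial.X_pow_eq_monomial]⟩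

theorem coeff_squarefreeExponent_eq_zero {ι K : Type*} [CommRing K] {f : MvPolynomial ι K}
    (hf : f ∈ squareIdeal ι K) (I : Finset ι) :
    f.coeff (squarefreeExponent I) = 0 := by
  classical
  by_contra h
  obtain ⟨_, ⟨i, rfl⟩, hi⟩ := MvPolynomial.mem_ideal_span_monomial_image.1 hf _
    (MvPolynomial.mem_support_iff.2 h)
  have := hi i
  rw [squarefreeExponent_apply] at this
  split_ifs at this <;> simp at this

/-- The Gaudin operator `∑ i, ∑ j, (∏ k ≠ i, j, (u - z k)) (1 - (i j))`, acting on functions of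
subsets of the sites; every unordered pair is counted twice. -/
def gaudin {ι R : Type*} [Fintype ι] [DecidableEq ι] [CommRing R] (z : ι → R) (u : R) :
    Matrix (Finset ι) (Finset ι) R :=
  ∑ i, ∑ j, (∏ k ∈ (univ.erase i).erase j, (u - z k)) •
    (1 - Equiv.Perm.permMatrix R (Equiv.swap i j).finsetCongr)

theorem gaudin_map {ι R S : Type*} [Fintype ι] [DecidableEq ι] [CommRing R] [CommRing S]
    (φ : R →+* S) (z : ι → R) (u : R) :
    φ.mapMatrix (gaudin z u) = gaudin (fun i => φ (z i)) (φ u) := by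
  have h : ∀ σ : Equiv.Perm (Finset ι),
      (σ.permMatrix R).map φ = σ.permMatrix S := by
    intro σ
    ext I J
    simp [PEquiv.toMatrix_apply, apply_ite φ]
  ext I J
  have h' : ∀ σ : Equiv.Perm (Finset ι), φ (σ.permMatrix R I J) = σ.permMatrix S I J :=
    fun σ => congrFun (congrFun (h σ) I) J
  simp only [gaudin, RingHom.mapMatrix_apply, Matrix.map_apply, Matrix.sum_apply, map_sum,
    Matrix.smul_apply, Matrix.sub_apply, smul_eq_mul, map_mul, map_sub, map_prod, h']
  simp [Matrix.one_apply, apply_ite φ]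

/-- The generating polynomial of the Bethe vector. -/
noncomputable def bethePolynomial {ι κ K : Type*} [Fintype ι] [Fintype κ] [Field K]
    (z : ι → K) (t : κ → K) : MvPolynomial ι K :=
  ∏ k, ∑ i, MvPolynomial.C (t k - z i)⁻¹ * MvPolynomial.X i

/-- The Bethe vector: the squarefree coefficients of the Bethe polynomial. -/
noncomputable def betheVector {ι κ K : Type*} [Fintype ι] [Fintype κ] [Field K]
    (z : ι → K) (t : κ → K) (I : Finset ι) : K :=
  (bethePolynomial z t).coeff (squarefreeExponent I)

theorem rename_swap_bethePolynomial {ι κ K : Type*} [Fintype ι] [DecidableEq ι] [Fintype κ]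
    [Field K] (z : ι → K) (t : κ → K) (i j : ι) :
    MvPolynomial.rename (Equiv.swap i j) (bethePolynomial z t) =
      ∏ k, ((∑ i, MvPolynomial.C (t k - z i)⁻¹ * MvPolynomial.X i) +
        (MvPolynomial.X i - MvPolynomial.X j) *
          MvPolynomial.C ((t k - z j)⁻¹ - (t k - z i)⁻¹)) := by
  rw [bethePolynomial, map_prod]
  refine prod_congr rfl fun k _ => ?_
  rcases eq_or_ne i j with rfl | hij
  · simp
  simp only [map_sum, map_mul, MvPolynomial.rename_C, MvPolynomial.rename_X]
  have hperm : ∑ l, MvPolynomial.C (t k - z l)⁻¹ * MvPolynomial.X (Equiv.swap i j l) =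
      ∑ l, MvPolynomial.C (t k - z (Equiv.swap i j l))⁻¹ * MvPolynomial.X l := by
    rw [← Equiv.sum_comp (Equiv.swap i j)]
    simp only [Equiv.swap_apply_self]
  rw [hperm, ← sub_eq_iff_eq_add', ← sum_sub_distrib, ← sum_subset (subset_univ {i, j}),
    sum_pair hij]
  · simp only [Equiv.swap_apply_left, Equiv.swap_apply_right, map_sub]
    ring
  · intro l _ hl
    simp only [mem_insert, mem_singleton, not_or] at hl
    rw [Equiv.swap_apply_of_ne_of_ne hl.1 hl.2, sub_self]

theorem gaudin_mulVec_betheVector {ι κ K : Type*} [Fintype ι] [DecidableEq ι] [Fintype κ]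
    [DecidableEq κ] [Field K] (z : ι → K) (t : κ → K) (u : K)
    (ht : Function.Injective t) (htz : ∀ k i, t k ≠ z i)
    (huz : ∀ i, u ≠ z i) (hut : ∀ k, u ≠ t k)
    (bethe : ∀ k, ∑ i, (t k - z i)⁻¹ = 2 * ∑ l ∈ univ.erase k, (t k - t l)⁻¹) :
    (gaudin z u).mulVec (betheVector z t) = (2 * (∏ i, (u - z i)) *
      ((∑ i, (u - z i)⁻¹) * (∑ k, (u - t k)⁻¹)
      - ∑ k, (u - t k)⁻¹ * ∑ l ∈ univ.erase k, (u - t l)⁻¹)) • betheVector z t := by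
  set E := (∑ i, (u - z i)⁻¹) * (∑ k, (u - t k)⁻¹)
      - ∑ k, (u - t k)⁻¹ * ∑ l ∈ univ.erase k, (u - t l)⁻¹ with hE
  let mk := Ideal.Quotient.mk (squareIdeal ι K)
  have key := sum_swap_bethe (A := MvPolynomial ι K ⧸ squareIdeal ι K) z t u
    (fun i => mk (MvPolynomial.X i))
    (fun i => by
      rw [← map_pow]; exact Ideal.Quotient.eq_zero_iff_mem.2 (X_sq_mem_squareIdeal i))
    ht htz huz hut bethe
    (fun k => mk (∑ i, MvPolynomial.C (t k - z i)⁻¹ * MvPolynomial.X i))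
    (fun k => by rw [map_sum]; rfl)
  have key' : ∑ i, ∑ j, MvPolynomial.C ((u - z i)⁻¹ * (u - z j)⁻¹) *
      (bethePolynomial z t - MvPolynomial.rename (Equiv.swap i j) (bethePolynomial z t)) -
      MvPolynomial.C (2 * E) * bethePolynomial z t ∈ squareIdeal ι K := by
    rw [← Ideal.Quotient.eq]
    have hmk : ∀ c, algebraMap K (MvPolynomial ι K ⧸ squareIdeal ι K) c =
        mk (MvPolynomial.C c) := fun _ => rfl
    simp only [rename_swap_bethePolynomial]
    simp only [hmk, ← map_sum mk, ← map_mul mk, ← map_sub mk, ← map_prod mk, ← map_add mk] at key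
    exact key
  have hcoeff : ∀ I, ∑ i, ∑ j, ((u - z i)⁻¹ * (u - z j)⁻¹) *
      (betheVector z t I - betheVector z t ((Equiv.swap i j).finsetCongr I)) =
      2 * E * betheVector z t I := by
    intro I
    have h := coeff_squarefreeExponent_eq_zero key' I
    rw [MvPolynomial.coeff_sub, sub_eq_zero] at h
    have hren : ∀ i j, (MvPolynomial.rename (Equiv.swap i j) (bethePolynomial z t)).coeff
        (squarefreeExponent I) = betheVector z t ((Equiv.swap i j).finsetCongr I) := by
      intro i j
      rw [betheVector, ← MvPolynomial.coeff_rename_mapDomain _ (Equiv.swap i j).injective,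
        mapDomain_squarefreeExponent, Equiv.finsetCongr_apply,
        MvPolynomial.rename_rename, ← Equiv.coe_trans, Equiv.swap_swap, Equiv.coe_refl,
        MvPolynomial.rename_id_apply]
    simp only [MvPolynomial.coeff_sum, MvPolynomial.coeff_C_mul, MvPolynomial.coeff_sub,
      hren] at h
    exact h
  have hprod : ∀ i j, i ≠ j → ∏ k ∈ (univ.erase i).erase j, (u - z k) =
      (∏ k, (u - z k)) * ((u - z i)⁻¹ * (u - z j)⁻¹) := by
    intro i j hij
    rw [← mul_prod_erase univ _ (mem_univ i),
      ← mul_prod_erase (univ.erase i) _ (mem_erase.2 ⟨hij.symm, mem_univ j⟩)]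
    have h1 := sub_ne_zero.2 (huz i)
    have h2 := sub_ne_zero.2 (huz j)
    field_simp
  ext I
  simp only [gaudin, Matrix.sum_mulVec, Matrix.smul_mulVec, Matrix.sub_mulVec, Matrix.one_mulVec,
    Matrix.permMatrix_mulVec, Finset.sum_apply, Pi.smul_apply, Pi.sub_apply, smul_eq_mul,
    Function.comp_apply]
  rw [mul_comm 2, mul_assoc, mul_assoc, ← mul_assoc 2, ← hcoeff, mul_sum]
  refine sum_congr rfl fun i _ => ?_
  rw [mul_sum]
  refine sum_congr rfl fun j _ => ?_
  rcases eq_or_ne i j with rfl | hij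
  · simp
  · rw [hprod i j hij, mul_assoc]

theorem eval_derivative_prod_X_sub_C {κ K : Type*} [DecidableEq κ] [Field K] (s : Finset κ)
    (t : κ → K) (u : K) (hu : ∀ k ∈ s, u ≠ t k) :
    (Polynomial.derivative (∏ k ∈ s, (Polynomial.X - Polynomial.C (t k)))).eval u =
      (∏ k ∈ s, (u - t k)) * ∑ k ∈ s, (u - t k)⁻¹ := by
  rw [Polynomial.derivative_prod_finset, Polynomial.eval_finsetSum, mul_sum]
  refine sum_congr rfl fun k hk => ?_
  rw [← mul_prod_erase s _ hk]
  have := sub_ne_zero.2 (hu k hk)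
  simp only [Polynomial.derivative_X_sub_C, mul_one, Polynomial.eval_prod, Polynomial.eval_sub,
    Polynomial.eval_X, Polynomial.eval_C]
  field_simp

theorem eval_derivative_derivative_prod_X_sub_C {κ K : Type*} [DecidableEq κ] [Field K]
    (s : Finset κ) (t : κ → K) (u : K) (hu : ∀ k ∈ s, u ≠ t k) :
    (Polynomial.derivative (Polynomial.derivative
      (∏ k ∈ s, (Polynomial.X - Polynomial.C (t k))))).eval u =
      (∏ k ∈ s, (u - t k)) * ∑ k ∈ s, (u - t k)⁻¹ * ∑ l ∈ s.erase k, (u - t l)⁻¹ := by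
  rw [Polynomial.derivative_prod_finset]
  simp only [Polynomial.derivative_X_sub_C, mul_one, Polynomial.derivative_sum]
  rw [Polynomial.eval_finsetSum, mul_sum]
  refine sum_congr rfl fun k hk => ?_
  rw [eval_derivative_prod_X_sub_C _ _ _ fun l hl => hu l (mem_of_mem_erase hl),
    ← mul_prod_erase s _ hk]
  have := sub_ne_zero.2 (hu k hk)
  field_simp

/-- The Bethe equations for the roots of one member of a pencil of polynomials. -/
theorem bethe_equation {ι κ K : Type*} [Fintype ι] [DecidableEq ι] [Fintype κ] [DecidableEq κ]
    [Field K] (p : Polynomial K) (z : ι → K) (t : κ → K) (ν : K) (hν : ν ≠ 0)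
    (ht : Function.Injective t) (htz : ∀ k i, t k ≠ z i)
    (hW : Polynomial.derivative p * (∏ k, (Polynomial.X - Polynomial.C (t k))) -
      p * Polynomial.derivative (∏ k, (Polynomial.X - Polynomial.C (t k))) =
        Polynomial.C ν * ∏ i, (Polynomial.X - Polynomial.C (z i))) (k : κ) :
    ∑ i, (t k - z i)⁻¹ = 2 * ∑ l ∈ univ.erase k, (t k - t l)⁻¹ := by
  set W := ∏ i, (Polynomial.X - Polynomial.C (z i)) with hWdef
  set q := ∏ k, (Polynomial.X - Polynomial.C (t k)) with hq
  set r := ∏ l ∈ univ.erase k, (Polynomial.X - Polynomial.C (t l)) with hr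
  have hqr : q = (Polynomial.X - Polynomial.C (t k)) * r :=
    (mul_prod_erase univ _ (mem_univ k)).symm
  have hne : ∀ l ∈ univ.erase k, t k ≠ t l := fun l hl => ht.ne (ne_of_mem_erase hl).symm
  have hr' := eval_derivative_prod_X_sub_C (univ.erase k) t (t k) hne
  rw [← hr] at hr'
  have hrk : r.eval (t k) = ∏ l ∈ univ.erase k, (t k - t l) := by
    simp [hr, Polynomial.eval_prod]
  have hW' := eval_derivative_prod_X_sub_C univ z (t k) fun i _ => htz k i
  have hWk : W.eval (t k) = ∏ i, (t k - z i) := by simp [hWdef, Polynomial.eval_prod]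
  rw [← hWdef, ← hWk] at hW'
  rw [← hrk] at hr'
  have hWne : W.eval (t k) ≠ 0 := by
    rw [hWk]; exact prod_ne_zero_iff.2 fun i _ => sub_ne_zero.2 (htz k i)
  have h0 := congrArg (Polynomial.eval (t k)) hW
  have h1 := congrArg (fun f => Polynomial.eval (t k) (Polynomial.derivative f)) hW
  simp only [hqr, Polynomial.derivative_mul, Polynomial.derivative_sub, Polynomial.derivative_X,
    Polynomial.derivative_C, Polynomial.eval_sub, Polynomial.eval_mul, Polynomial.eval_add,
    Polynomial.eval_X, Polynomial.eval_C, Polynomial.derivative_add, Polynomial.derivative_one,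
    Polynomial.eval_one, Polynomial.eval_zero, sub_self, Polynomial.derivative_zero, hr', hW']
    at h0 h1
  apply mul_left_cancel₀ (mul_ne_zero hν hWne)
  linear_combination -h1 + 2 * (∑ l ∈ univ.erase k, (t k - t l)⁻¹) * h0

theorem det_gaudin_sub_eq_zero {ι κ K : Type*} [Fintype ι] [DecidableEq ι] [Fintype κ]
    [Field K] (p q : Polynomial K) (z : ι → K) (t : κ → K) (u ν : K) (hν : ν ≠ 0)
    (ht : Function.Injective t) (htz : ∀ k i, t k ≠ z i)
    (huz : ∀ i, u ≠ z i) (hut : ∀ k, u ≠ t k)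
    (hq : q = ∏ k, (Polynomial.X - Polynomial.C (t k)))
    (hW : Polynomial.derivative p * q - p * Polynomial.derivative q =
        Polynomial.C ν * ∏ i, (Polynomial.X - Polynomial.C (z i)))
    (hv : betheVector z t ≠ 0) :
    (ν • gaudin z u - (2 * (Polynomial.derivative (Polynomial.derivative p) *
      Polynomial.derivative q - Polynomial.derivative p *
        Polynomial.derivative (Polynomial.derivative q)).eval u) • 1).det = 0 := by
  classical
  refine Matrix.exists_mulVec_eq_zero_iff.1 ⟨betheVector z t, hv, ?_⟩
  rw [Matrix.sub_mulVec, Matrix.smul_mulVec, gaudin_mulVec_betheVector z t u ht htz huz hut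
    (bethe_equation p z t ν hν ht htz (hq ▸ hW)), Matrix.smul_mulVec, Matrix.one_mulVec,
    smul_smul, ← sub_smul]
  refine (congrArg (· • betheVector z t) ?_).trans (zero_smul K _)
  have hq' := eval_derivative_prod_X_sub_C univ t u fun k _ => hut k
  have hq'' := eval_derivative_derivative_prod_X_sub_C univ t u fun k _ => hut k
  have hW' := eval_derivative_prod_X_sub_C univ z u fun i _ => huz i
  have hqu : q.eval u = ∏ k, (u - t k) := by simp [hq, Polynomial.eval_prod]
  have hqne : q.eval u ≠ 0 := by
    rw [hqu]; exact prod_ne_zero_iff.2 fun k _ => sub_ne_zero.2 (hut k)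
  have hWu : (∏ i, (Polynomial.X - Polynomial.C (z i))).eval u = ∏ i, (u - z i) := by
    simp [Polynomial.eval_prod]
  rw [← hq, ← hqu] at hq' hq''
  have h0 := congrArg (Polynomial.eval u) hW
  have h1 := congrArg (fun f => Polynomial.eval u (Polynomial.derivative f)) hW
  simp only [Polynomial.derivative_mul, Polynomial.derivative_sub,
    Polynomial.derivative_C, Polynomial.eval_sub, Polynomial.eval_mul, Polynomial.eval_add,
    Polynomial.eval_C, Polynomial.eval_zero, hW', hq', hq'', hWu] at h0 h1 ⊢
  apply mul_left_cancel₀ hqne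
  linear_combination -2 * (q.eval u * ∑ k, (u - t k)⁻¹) * h1 +
    2 * (q.eval u * ∑ k, (u - t k)⁻¹ * ∑ l ∈ univ.erase k, (u - t l)⁻¹) * h0

theorem coeff_prod_linear {ι κ K : Type*} [Fintype ι] [Field K] (c : κ → ι → K)
    (e : κ → K) (s : Finset κ) (J : Finset ι) (hc : ∀ k, ∀ i ∈ J, c k i = e k)
    (hJ : J.card = s.card) :
    (∏ k ∈ s, ∑ i, MvPolynomial.C (c k i) * MvPolynomial.X i).coeff (squarefreeExponent J) =
      s.card.factorial * ∏ k ∈ s, e k := by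
  classical
  induction s using Finset.induction_on generalizing J with
  | empty =>
    obtain rfl : J = ∅ := card_eq_zero.1 (by simpa using hJ)
    simp [squarefreeExponent]
  | insert a s ha ih =>
    rw [card_insert_of_notMem ha] at hJ ⊢
    rw [prod_insert ha, prod_insert ha, sum_mul, MvPolynomial.coeff_sum]
    have hsupp : ∀ i, i ∈ (squarefreeExponent J).support ↔ i ∈ J := by
      intro i; simp [squarefreeExponent_apply]
    simp only [mul_assoc, MvPolynomial.coeff_C_mul, MvPolynomial.coeff_X_mul', hsupp,
      squarefreeExponent_sub_single, mul_ite, mul_zero]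
    rw [sum_ite_mem, univ_inter]
    have : ∀ i ∈ J, c a i * (∏ k ∈ s, ∑ i, MvPolynomial.C (c k i) *
        MvPolynomial.X i).coeff (squarefreeExponent (J.erase i)) =
        e a * (s.card.factorial * ∏ k ∈ s, e k) := by
      intro i hi
      rw [hc a i hi, ih _ (fun k j hj => hc k j (mem_of_mem_erase hj))
        (by rw [card_erase_of_mem hi, hJ]; rfl)]
    rw [sum_congr rfl this, sum_const, hJ, Nat.factorial_succ, nsmul_eq_mul]
    push_cast
    ring

/-- Nonvanishing of the Bethe vector when enough of the sites sit at the origin. -/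
theorem betheVector_ne_zero_of_zero_sites {ι κ K : Type*} [Fintype ι] [Fintype κ] [Field K]
    [CharZero K] (z : ι → K) (t : κ → K) (J : Finset ι) (hJ : J.card = Fintype.card κ)
    (hz : ∀ i ∈ J, z i = 0) (ht : ∀ k, t k ≠ 0) : betheVector z t ≠ 0 := by
  intro h
  have := congrFun h J
  rw [betheVector, bethePolynomial, coeff_prod_linear _ (fun k => (t k)⁻¹) univ J
    (fun k i hi => by rw [hz i hi, sub_zero]) hJ] at this
  exact mul_ne_zero (Nat.cast_ne_zero.2 (Nat.factorial_ne_zero _))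
    (prod_ne_zero_iff.2 fun k _ => inv_ne_zero (ht k)) this

/-- The Bethe polynomial with denominators cleared. -/
noncomputable def clearedBethePolynomial {ι κ R : Type*} [Fintype ι] [DecidableEq ι] [Fintype κ]
    [CommRing R] (z : ι → R) (t : κ → R) : MvPolynomial ι R :=
  ∏ k, ∑ i, MvPolynomial.C (∏ j ∈ univ.erase i, (t k - z j)) * MvPolynomial.X i

theorem map_clearedBethePolynomial {ι κ R K : Type*} [Fintype ι] [DecidableEq ι] [Fintype κ]
    [CommRing R] [Field K] (φ : R →+* K) (z : ι → R) (t : κ → R)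
    (htz : ∀ k i, φ (t k) ≠ φ (z i)) :
    MvPolynomial.map φ (clearedBethePolynomial z t) =
      MvPolynomial.C (∏ k, ∏ i, (φ (t k) - φ (z i))) *
        bethePolynomial (fun i => φ (z i)) (fun k => φ (t k)) := by
  simp only [clearedBethePolynomial, bethePolynomial, map_prod MvPolynomial.C, map_prod,
    ← prod_mul_distrib, map_sum, map_mul, MvPolynomial.map_C, MvPolynomial.map_X, mul_sum]
  refine prod_congr rfl fun k _ => sum_congr rfl fun i _ => ?_
  rw [← mul_assoc]
  simp only [← map_prod MvPolynomial.C, ← map_mul MvPolynomial.C]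
  rw [← mul_prod_erase univ _ (mem_univ i)]
  congr 2
  have := sub_ne_zero.2 (htz k i)
  simp only [map_sub]
  field_simp

theorem betheVector_ne_zero_of_specialization {ι κ R K F : Type*} [Fintype ι] [Fintype κ]
    [CommRing R] [Field K] [Field F] (φ : R →+* F) (f : R →+* K)
    (hf : Function.Injective f) (z : ι → R) (t : κ → R) (htz : ∀ k i, φ (t k) ≠ φ (z i))
    (h : betheVector (fun i => φ (z i)) (fun k => φ (t k)) ≠ 0) :
    betheVector (fun i => f (z i)) (fun k => f (t k)) ≠ 0 := by
  classical
  obtain ⟨I, hI⟩ := Function.ne_iff.1 h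
  have htz' : ∀ k i, f (t k) ≠ f (z i) := fun k i hki => htz k i (congrArg φ (hf hki))
  have h1 := congrArg (MvPolynomial.coeff (squarefreeExponent I))
    (map_clearedBethePolynomial φ z t htz)
  have h2 := congrArg (MvPolynomial.coeff (squarefreeExponent I))
    (map_clearedBethePolynomial f z t htz')
  rw [MvPolynomial.coeff_map, MvPolynomial.coeff_C_mul] at h1 h2
  have hne : (clearedBethePolynomial z t).coeff (squarefreeExponent I) ≠ 0 := by
    intro h0
    rw [h0, map_zero, eq_comm] at h1
    exact mul_ne_zero (prod_ne_zero_iff.2 fun k _ => prod_ne_zero_iff.2 fun i _ =>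
      sub_ne_zero.2 (htz k i)) hI h1
  intro h0
  have h3 : (bethePolynomial (fun i => f (z i)) (fun k => f (t k))).coeff
    (squarefreeExponent I) = 0 := congrFun h0 I
  rw [h3, mul_zero] at h2
  exact hne (hf (h2.trans (map_zero f).symm))

theorem exists_prod_X_sub_C_of_monic {K : Type*} [Field K] [IsAlgClosed K] (f : Polynomial K)
    (hf : f.Monic) : ∃ n, ∃ t : Fin n → K, f = ∏ k, (Polynomial.X - Polynomial.C (t k)) := by
  obtain ⟨l, hl⟩ := Quot.exists_rep f.roots
  refine ⟨l.length, l.get, ?_⟩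
  conv_lhs => rw [(IsAlgClosed.splits f).eq_prod_roots_of_monic hf, ← hl]
  exact (Fin.prod_univ_fun_getElem l fun x => Polynomial.X - Polynomial.C x).symm

/-- The integral closure of `ℂ[s]` in an algebraic closure of `ℂ(s)`. -/
abbrev AlgebraicFunctionRing : Type :=
  integralClosure (Polynomial ℂ) (AlgebraicClosure (FractionRing (Polynomial ℂ)))

theorem AlgebraicFunctionRing.exists_prod_X_sub_C (f : Polynomial (Polynomial ℂ)) (hf : f.Monic) :
    ∃ n, ∃ t : Fin n → AlgebraicFunctionRing, f.map (algebraMap _ AlgebraicFunctionRing) =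
      ∏ k, (Polynomial.X - Polynomial.C (t k)) := by
  let K := AlgebraicClosure (FractionRing (Polynomial ℂ))
  obtain ⟨n, t, ht⟩ := exists_prod_X_sub_C_of_monic (f.map (algebraMap _ K)) (hf.map _)
  have htint : ∀ k, IsIntegral (Polynomial ℂ) (t k) := by
    intro k
    refine ⟨f, hf, ?_⟩
    rw [← Polynomial.eval_map, ht, Polynomial.eval_prod]
    exact prod_eq_zero (mem_univ k) (by simp)
  refine ⟨n, fun k => ⟨t k, htint k⟩, ?_⟩
  apply Polynomial.map_injective (algebraMap AlgebraicFunctionRing K)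
    (FaithfulSMul.algebraMap_injective _ _)
  rw [Polynomial.map_map, ← IsScalarTower.algebraMap_eq, ht, Polynomial.map_prod]
  simp only [Polynomial.map_sub, Polynomial.map_X, Polynomial.map_C]
  rfl

/-- Every algebraic function of `s` that is integral over `ℂ[s]` can be specialized at `s₀`. -/
theorem AlgebraicFunctionRing.exists_specialization (s₀ : ℂ) :
    ∃ φ : AlgebraicFunctionRing →+* ℂ,
      φ.comp (algebraMap (Polynomial ℂ) AlgebraicFunctionRing) = Polynomial.evalRingHom s₀ := by
  have hmax : (RingHom.ker (Polynomial.evalRingHom s₀)).IsMaximal :=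
    RingHom.ker_isMaximal_of_surjective _ fun c => ⟨Polynomial.C c, by simp⟩
  have hinj : Function.Injective (algebraMap (Polynomial ℂ) AlgebraicFunctionRing) := by
    let K := AlgebraicClosure (FractionRing (Polynomial ℂ))
    have h : Function.Injective (algebraMap (Polynomial ℂ) K) := by
      rw [IsScalarTower.algebraMap_eq (Polynomial ℂ) (FractionRing (Polynomial ℂ)) K]
      exact (algebraMap (FractionRing (Polynomial ℂ)) K).injective.comp
        (IsFractionRing.injective _ _)
    rw [IsScalarTower.algebraMap_eq (Polynomial ℂ) AlgebraicFunctionRing K,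
      RingHom.coe_comp] at h
    exact Function.Injective.of_comp h
  obtain ⟨Q, hQ, hcomap⟩ := Ideal.exists_ideal_over_maximal_of_isIntegral
    (S := AlgebraicFunctionRing) (RingHom.ker (Polynomial.evalRingHom s₀))
    (by rw [(RingHom.injective_iff_ker_eq_bot _).1 hinj]; exact bot_le)
  let g : Polynomial ℂ →+* AlgebraicFunctionRing ⧸ Q :=
    (Ideal.Quotient.mk Q).comp (algebraMap _ _)
  let h : ℂ →+* AlgebraicFunctionRing ⧸ Q := g.comp Polynomial.C
  have hg : g = h.comp (Polynomial.evalRingHom s₀) := by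
    ext f
    · simp [h]
    · have : (Polynomial.X - Polynomial.C s₀ : Polynomial ℂ) ∈
          Ideal.comap (algebraMap _ AlgebraicFunctionRing) Q := by
        rw [hcomap]; simp [RingHom.mem_ker]
      have h0 : g (Polynomial.X - Polynomial.C s₀) = 0 := Ideal.Quotient.eq_zero_iff_mem.2 this
      rw [map_sub, sub_eq_zero] at h0
      simpa [h] using h0
  let : Algebra ℂ (AlgebraicFunctionRing ⧸ Q) := h.toAlgebra
  have : Algebra.IsIntegral ℂ (AlgebraicFunctionRing ⧸ Q) := by
    refine ⟨fun x => ?_⟩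
    obtain ⟨y, rfl⟩ := Ideal.Quotient.mk_surjective x
    obtain ⟨f, hf, hfy⟩ := Algebra.IsIntegral.isIntegral (R := Polynomial ℂ) y
    refine ⟨f.map (Polynomial.evalRingHom s₀), hf.map _, ?_⟩
    rw [Polynomial.eval₂_map]
    have : (algebraMap ℂ (AlgebraicFunctionRing ⧸ Q)).comp (Polynomial.evalRingHom s₀) =
      (Ideal.Quotient.mk Q).comp (algebraMap _ _) := hg.symm
    rw [this, ← Polynomial.hom_eval₂, hfy, map_zero]
  have := hQ.isPrime
  let e := RingEquiv.ofBijective (algebraMap ℂ (AlgebraicFunctionRing ⧸ Q))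
    IsAlgClosed.algebraMap_bijective_of_isIntegral
  refine ⟨e.symm.toRingHom.comp (Ideal.Quotient.mk Q), ?_⟩
  rw [RingHom.comp_assoc]
  change e.symm.toRingHom.comp g = _
  rw [hg]
  ext f
  · simp; exact e.symm_apply_apply f
  · simp; exact e.symm_apply_apply s₀

/-- The Wronskian `p′q − pq′`. -/
noncomputable def wronskianDet {R : Type*} [CommRing R] (p q : Polynomial R) : Polynomial R :=
  Polynomial.derivative p * q - p * Polynomial.derivative q

theorem map_wronskianDet {R S : Type*} [CommRing R] [CommRing S] (φ : R →+* S)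
    (p q : Polynomial R) :
    (wronskianDet p q).map φ = wronskianDet (p.map φ) (q.map φ) := by
  simp [wronskianDet, Polynomial.derivative_map]

theorem natDegree_wronskianDet_le {R : Type*} [CommRing R] {p q : Polynomial R} {a b : ℕ}
    (hp : p.natDegree ≤ a + 1) (hq : q.natDegree ≤ b + 1) :
    (wronskianDet p q).natDegree ≤ a + b + 1 := by
  have hp' := (Polynomial.natDegree_derivative_le p).trans (Nat.sub_le_sub_right hp 1)
  have hq' := (Polynomial.natDegree_derivative_le q).trans (Nat.sub_le_sub_right hq 1)
  refine (Polynomial.natDegree_sub_le _ _).trans (max_le ?_ ?_)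
  · exact (Polynomial.natDegree_mul_le_of_le hp' hq).trans (by omega)
  · exact (Polynomial.natDegree_mul_le_of_le hp hq').trans (by omega)

theorem coeff_wronskianDet {R : Type*} [CommRing R] {p q : Polynomial R} {a b : ℕ}
    (hp : p.natDegree ≤ a + 1) (hq : q.natDegree ≤ b + 1) :
    (wronskianDet p q).coeff (a + b + 1) =
      ((a : R) - b) * (p.coeff (a + 1) * q.coeff (b + 1)) := by
  have hp' : (Polynomial.derivative p).natDegree ≤ a :=
    (Polynomial.natDegree_derivative_le p).trans (Nat.sub_le_sub_right hp 1)
  have hq' : (Polynomial.derivative q).natDegree ≤ b :=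
    (Polynomial.natDegree_derivative_le q).trans (Nat.sub_le_sub_right hq 1)
  rw [wronskianDet, Polynomial.coeff_sub]
  have h1 := Polynomial.coeff_mul_add_eq_of_natDegree_le hp' hq
  have h2 := Polynomial.coeff_mul_add_eq_of_natDegree_le hp hq'
  rw [← add_assoc] at h1
  rw [show a + 1 + b = a + b + 1 by ring] at h2
  rw [h1, h2, Polynomial.coeff_derivative, Polynomial.coeff_derivative]
  ring

theorem card_filter_zero_of_X_pow_dvd {ι K : Type*} [Fintype ι] [Field K] [DecidableEq K]
    (z : ι → K) (m : ℕ) (h : Polynomial.X ^ m ∣ ∏ i, (Polynomial.X - Polynomial.C (z i))) :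
    m ≤ (univ.filter fun i => z i = 0).card := by
  by_contra! hlt
  have hz := Polynomial.X_pow_dvd_iff.1 h _ hlt
  rw [← prod_filter_mul_prod_filter_not univ (fun i => z i = 0),
    prod_congr rfl (g := fun _ => Polynomial.X) (fun i hi => by simp [(mem_filter.1 hi).2]),
    prod_const, Polynomial.coeff_X_pow_mul', if_pos le_rfl, Nat.sub_self,
    Polynomial.coeff_zero_eq_eval_zero, Polynomial.eval_prod, prod_eq_zero_iff] at hz
  obtain ⟨i, hi, hi0⟩ := hz
  exact (mem_filter.1 hi).2 (by simpa using hi0)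

theorem map_gaudin_sub {ι R S : Type*} [Fintype ι] [DecidableEq ι] [CommRing R] [CommRing S]
    (φ : R →+* S) (z : ι → R) (u ν : R) (p : Polynomial R) :
    φ (ν • gaudin z u - (2 * p.eval u) • 1).det =
      (φ ν • gaudin (fun i => φ (z i)) (φ u) - (2 * (p.map φ).eval (φ u)) • 1).det := by
  rw [RingHom.map_det, map_sub, ← gaudin_map]
  congr 2
  · ext; simp
  · ext I J
    rw [Polynomial.eval_map, Polynomial.eval₂_at_apply]
    simp [Matrix.one_apply, apply_ite φ, map_ofNat]

theorem map_prod_X_sub_C {ι R S : Type*} [Fintype ι] [CommRing R] [CommRing S] (φ : R →+* S)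
    (z : ι → R) : (∏ i, (Polynomial.X - Polynomial.C (z i))).map φ =
      ∏ i, (Polynomial.X - Polynomial.C (φ (z i))) := by
  simp [Polynomial.map_prod]

/-- For the pencil spanned by `X ^ a` and `X ^ b - 1` the Bethe data are nondegenerate. -/
theorem betheVector_ne_zero_of_model {n m a b : ℕ} (hab : b < a) (z : Fin n → ℂ) (t : Fin m → ℂ)
    (ht : ∏ k, (Polynomial.X - Polynomial.C (t k)) = Polynomial.X ^ (b + 1) - 1)
    (hz : wronskianDet (Polynomial.X ^ (a + 1)) (Polynomial.X ^ (b + 1) - 1) =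
      Polynomial.C ((a : ℂ) - b) * ∏ i, (Polynomial.X - Polynomial.C (z i))) :
    Function.Injective t ∧ (∀ k i, t k ≠ z i) ∧ betheVector z t ≠ 0 := by
  have htpow : ∀ k, t k ^ (b + 1) = 1 := by
    intro k
    have h := congrArg (Polynomial.eval (t k)) ht
    rw [Polynomial.eval_prod, prod_eq_zero (mem_univ k) (by simp)] at h
    simp only [Polynomial.eval_sub, Polynomial.eval_pow, Polynomial.eval_X,
      Polynomial.eval_one] at h
    exact sub_eq_zero.1 h.symm
  have ht0 : ∀ k, t k ≠ 0 := fun k h => by simpa [h] using htpow k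
  have hν : (a : ℂ) - b ≠ 0 := sub_ne_zero.2 (by exact_mod_cast hab.ne')
  have hm : m = b + 1 := by
    have := congrArg Polynomial.natDegree ht
    rw [Polynomial.natDegree_prod_of_monic _ _ fun k _ => Polynomial.monic_X_sub_C _,
      ← Polynomial.C_1, Polynomial.natDegree_X_pow_sub_C] at this
    simpa using this
  refine ⟨?_, ?_, ?_⟩
  · rw [← Polynomial.separable_prod_X_sub_C_iff, ht, ← Polynomial.C_1]
    exact Polynomial.separable_X_pow_sub_C 1 (by exact_mod_cast b.succ_ne_zero) one_ne_zero
  · intro k i hki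
    have h := congrArg (Polynomial.eval (t k)) hz
    rw [Polynomial.eval_mul, Polynomial.eval_prod, prod_eq_zero (mem_univ i) (by simp [hki]),
      mul_zero] at h
    simp only [wronskianDet, Polynomial.derivative_sub, Polynomial.derivative_one, sub_zero,
      Polynomial.derivative_X_pow, Polynomial.eval_sub, Polynomial.eval_mul, Polynomial.eval_pow,
      Polynomial.eval_X, Polynomial.eval_C, Polynomial.eval_one, htpow, sub_self, mul_zero,
      zero_sub, neg_eq_zero] at h
    have hb : ((b + 1 : ℕ) : ℂ) ≠ 0 := by exact_mod_cast b.succ_ne_zero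
    exact mul_ne_zero (pow_ne_zero _ (ht0 k)) (mul_ne_zero hb (pow_ne_zero _ (ht0 k))) h
  · have hdvd : Polynomial.X ^ a ∣ ∏ i, (Polynomial.X - Polynomial.C (z i)) := by
      have h : Polynomial.X ^ a ∣
          Polynomial.C ((a : ℂ) - b) * ∏ i, (Polynomial.X - Polynomial.C (z i)) := by
        rw [← hz, wronskianDet, Polynomial.derivative_X_pow, Nat.add_sub_cancel]
        refine dvd_sub ?_ ?_
        · exact (dvd_mul_left _ _).mul_right _
        · exact (pow_dvd_pow _ a.le_succ).mul_right _
      rwa [(Polynomial.isUnit_C.2 (isUnit_iff_ne_zero.2 hν)).dvd_mul_left] at h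
    obtain ⟨J, hJ, hJc⟩ := exists_subset_card_eq
      ((hm.trans_le hab).trans (card_filter_zero_of_X_pow_dvd z a hdvd))
    exact betheVector_ne_zero_of_zero_sites z t J (by simpa using hJc)
      (fun i hi => (mem_filter.1 (hJ hi)).2) ht0

/-- The Wronskian of the derivatives of a pencil is an eigenvalue of the Gaudin operator whose
sites are the roots of the Wronskian of the pencil. -/
theorem exists_gaudin_eigenvalue {a b : ℕ} (hab : b < a) (p q : Polynomial ℂ) (hp : p.Monic)
    (hq : q.Monic) (hpa : p.natDegree = a + 1) (hqb : q.natDegree = b + 1) :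
    ∃ n, ∃ z : Fin n → ℂ, wronskianDet p q =
        Polynomial.C ((a : ℂ) - b) * ∏ i, (Polynomial.X - Polynomial.C (z i)) ∧
      ∃ S : Finset ℂ, ∀ u ∉ S, (((a : ℂ) - b) • gaudin z u - (2 * (wronskianDet
        (Polynomial.derivative p) (Polynomial.derivative q)).eval u) • 1).det = 0 := by
  have hν : (a : ℂ) - b ≠ 0 := sub_ne_zero.2 (by exact_mod_cast hab.ne')
  -- the straight line from the given pencil to the model pencil
  let P : Polynomial (Polynomial ℂ) := Polynomial.X ^ (a + 1) +
    Polynomial.C (1 - Polynomial.X) * (p - Polynomial.X ^ (a + 1)).map Polynomial.C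
  let Q : Polynomial (Polynomial ℂ) := Polynomial.X ^ (b + 1) +
    (Polynomial.C (1 - Polynomial.X) * (q - Polynomial.X ^ (b + 1)).map Polynomial.C -
      Polynomial.C Polynomial.X)
  have hs : (1 - Polynomial.X : Polynomial ℂ) ≠ 0 := fun h => by
    simpa using congrArg (Polynomial.eval 0) h
  have hdeg : ∀ (f : Polynomial ℂ) (c : ℕ), f.Monic → f.natDegree = c + 1 →
      (Polynomial.C (1 - Polynomial.X : Polynomial ℂ) *
        (f - Polynomial.X ^ (c + 1)).map Polynomial.C).degree < (c + 1 : ℕ) := by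
    intro f c hf hfc
    rw [Polynomial.degree_C_mul hs]
    refine lt_of_le_of_lt Polynomial.degree_map_le ?_
    rw [← hfc, ← Polynomial.degree_eq_natDegree hf.ne_zero]
    refine Polynomial.degree_sub_lt_left ?_ hf.ne_zero (by rw [hf.leadingCoeff]; simp)
    rw [Polynomial.degree_X_pow, Polynomial.degree_eq_natDegree hf.ne_zero]
  have hPm : P.Monic := Polynomial.monic_X_pow_add (hdeg p a hp hpa)
  have hQd := lt_of_le_of_lt (Polynomial.degree_sub_le
      (Polynomial.C (1 - Polynomial.X : Polynomial ℂ) *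
        (q - Polynomial.X ^ (b + 1)).map Polynomial.C) (Polynomial.C Polynomial.X))
    (max_lt (hdeg q b hq hqb) (lt_of_le_of_lt Polynomial.degree_C_le
      (by exact_mod_cast b.succ_pos)))
  have hQm : Q.Monic := Polynomial.monic_X_pow_add hQd
  have hPn : P.natDegree = a + 1 := Polynomial.natDegree_eq_of_degree_eq_some (by
    rw [Polynomial.degree_add_eq_left_of_degree_lt (by simpa using hdeg p a hp hpa),
      Polynomial.degree_X_pow])
  have hQn : Q.natDegree = b + 1 := Polynomial.natDegree_eq_of_degree_eq_some (by
    rw [Polynomial.degree_add_eq_left_of_degree_lt (by simpa using hQd), Polynomial.degree_X_pow])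
  let V : Polynomial (Polynomial ℂ) :=
    Polynomial.C (Polynomial.C ((a : ℂ) - b)⁻¹) * wronskianDet P Q
  have hV : wronskianDet P Q = Polynomial.C (Polynomial.C ((a : ℂ) - b)) * V := by
    rw [← mul_assoc, ← Polynomial.C_mul, ← Polynomial.C_mul, mul_inv_cancel₀ hν]
    simp
  have hVm : V.Monic := by
    refine Polynomial.monic_of_natDegree_le_of_coeff_eq_one (a + b + 1)
      ((Polynomial.natDegree_C_mul_le _ _).trans
        (natDegree_wronskianDet_le hPn.le hQn.le)) ?_
    rw [Polynomial.coeff_C_mul, coeff_wronskianDet hPn.le hQn.le, ← hPn, ← hQn,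
      hPm.coeff_natDegree, hQm.coeff_natDegree, mul_one, mul_one, ← Polynomial.C_eq_natCast,
      ← Polynomial.C_eq_natCast, ← Polynomial.C_sub, ← Polynomial.C_mul, inv_mul_cancel₀ hν,
      Polynomial.C_1]
  obtain ⟨n, z, hz⟩ := AlgebraicFunctionRing.exists_prod_X_sub_C V hVm
  obtain ⟨m, t, ht⟩ := AlgebraicFunctionRing.exists_prod_X_sub_C Q hQm
  obtain ⟨φ, hφ⟩ := AlgebraicFunctionRing.exists_specialization 0
  obtain ⟨ψ, hψ⟩ := AlgebraicFunctionRing.exists_specialization 1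
  have hC : (Polynomial.evalRingHom (0 : ℂ)).comp Polynomial.C = RingHom.id ℂ := by
    ext; simp
  have hP0 : P.map (Polynomial.evalRingHom 0) = p := by
    simp [P, Polynomial.map_map, hC]
  have hQ0 : Q.map (Polynomial.evalRingHom 0) = q := by
    simp [Q, Polynomial.map_map, hC]
  have hP1 : P.map (Polynomial.evalRingHom 1) = Polynomial.X ^ (a + 1) := by
    simp [P]
  have hQ1 : Q.map (Polynomial.evalRingHom 1) = Polynomial.X ^ (b + 1) - 1 := by
    simp [Q, sub_eq_add_neg]
  have hspec : ∀ {S : Type} [CommRing S] (θ : AlgebraicFunctionRing →+* S),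
      wronskianDet (P.map (θ.comp (algebraMap _ _))) (Q.map (θ.comp (algebraMap _ _))) =
        Polynomial.C (θ (algebraMap _ _ (Polynomial.C ((a : ℂ) - b)))) *
          ∏ i, (Polynomial.X - Polynomial.C (θ (z i))) := by
    intro S _ θ
    rw [← map_wronskianDet, hV, Polynomial.map_mul, Polynomial.map_C, ← map_prod_X_sub_C, ← hz,
      Polynomial.map_map]
    rfl
  have hspecQ : ∀ {S : Type} [CommRing S] (θ : AlgebraicFunctionRing →+* S),
      Q.map (θ.comp (algebraMap _ _)) = ∏ k, (Polynomial.X - Polynomial.C (θ (t k))) := by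
    intro S _ θ
    rw [← map_prod_X_sub_C, ← ht, Polynomial.map_map]
  have hconst : ∀ c s₀ (θ : AlgebraicFunctionRing →+* ℂ),
      θ.comp (algebraMap _ _) = Polynomial.evalRingHom s₀ →
      θ (algebraMap _ _ (Polynomial.C c)) = c := by
    intro c s₀ θ hθ
    have := RingHom.congr_fun hθ (Polynomial.C c)
    simpa using this
  obtain ⟨hinj, hne, hvec⟩ := betheVector_ne_zero_of_model hab (fun i => ψ (z i))
    (fun k => ψ (t k)) (by rw [← hspecQ, hψ, hQ1])
    (by have := hspec ψ; rwa [hψ, hP1, hQ1, hconst _ _ ψ hψ] at this)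
  refine ⟨n, fun i => φ (z i), ?_, univ.image (fun i => ψ (z i)) ∪ univ.image (fun k => ψ (t k)),
    fun u hu => ?_⟩
  · have := hspec φ
    rwa [hφ, hP0, hQ0, hconst _ _ φ hφ] at this
  simp only [mem_union, mem_image, mem_univ, true_and, not_or, not_exists] at hu
  let f := algebraMap AlgebraicFunctionRing (FractionRing AlgebraicFunctionRing)
  have hf : Function.Injective f := IsFractionRing.injective _ _
  let v : AlgebraicFunctionRing := algebraMap _ _ (Polynomial.C u)
  let μ : AlgebraicFunctionRing := algebraMap _ _ (Polynomial.C ((a : ℂ) - b))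
  let g := algebraMap (Polynomial ℂ) AlgebraicFunctionRing
  have hψv : ψ v = u := hconst _ _ ψ hψ
  have hφv : φ v = u := hconst _ _ φ hφ
  have hφμ : φ μ = (a : ℂ) - b := hconst _ _ φ hφ
  have hμ : μ ≠ 0 := fun h => hν (by rw [← hφμ, h, map_zero])
  have hdet := det_gaudin_sub_eq_zero (P.map (f.comp g)) (Q.map (f.comp g)) (fun i => f (z i))
    (fun k => f (t k)) (f v) (f μ) ((map_ne_zero_iff f hf).2 hμ)
    (fun k l h => hinj (congrArg ψ (hf h)))
    (fun k i h => hne k i (congrArg ψ (hf h)))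
    (fun i h => hu.1 i (by rw [← hf h, hψv]))
    (fun k h => hu.2 k (by rw [← hf h, hψv]))
    (hspecQ f) (hspec f)
    (betheVector_ne_zero_of_specialization ψ f hf z t hne hvec)
  have hdetR : (μ • gaudin z v - (2 * (wronskianDet (Polynomial.derivative (P.map g))
      (Polynomial.derivative (Q.map g))).eval v) • 1).det = 0 := by
    apply hf
    rw [map_gaudin_sub, map_zero, map_wronskianDet, ← Polynomial.derivative_map,
      ← Polynomial.derivative_map, Polynomial.map_map, Polynomial.map_map]
    exact hdet
  have h0 := congrArg φ hdetR
  rw [map_gaudin_sub, map_zero, map_wronskianDet, ← Polynomial.derivative_map,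
      ← Polynomial.derivative_map, Polynomial.map_map, Polynomial.map_map, hφ, hP0, hQ0, hφv,
      hφμ] at h0
  exact h0

theorem isHermitian_gaudin {ι R : Type*} [Fintype ι] [DecidableEq ι] [CommRing R] [StarRing R]
    (z : ι → R) (u : R) (hz : ∀ i, star (z i) = z i) (hu : star u = u) :
    (gaudin z u).IsHermitian := by
  simp only [Matrix.IsHermitian, gaudin, Matrix.conjTranspose_sum, Matrix.conjTranspose_smul,
    Matrix.conjTranspose_sub, Matrix.conjTranspose_one, Matrix.conjTranspose_permMatrix,
    star_prod, star_sub, hz, hu]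
  rfl

open scoped ComplexOrder in
theorem im_eq_zero_of_det_sub_smul_one_eq_zero {n : Type*} [Fintype n] [DecidableEq n]
    {M : Matrix n n ℂ} (hM : M.IsHermitian) {μ : ℂ} (h : (M - μ • 1).det = 0) : μ.im = 0 := by
  obtain ⟨v, hv, hMv⟩ := Matrix.exists_mulVec_eq_zero_iff.2 h
  rw [Matrix.sub_mulVec, Matrix.smul_mulVec, Matrix.one_mulVec, sub_eq_zero] at hMv
  have him := hM.im_star_dotProduct_mulVec_self v
  have hpos := Matrix.dotProduct_star_self_pos_iff.2 hv
  rw [hMv, dotProduct_smul, smul_eq_mul] at him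
  rw [Complex.pos_iff] at hpos
  have : μ.im * (star v ⬝ᵥ v).re = 0 := by
    rwa [RCLike.im_eq_complex_im, Complex.mul_im, ← hpos.2, mul_zero, zero_add] at him
  exact (mul_eq_zero.1 this).resolve_right hpos.1.ne'

theorem map_conj_eq_of_forall_isRoot {f : Polynomial ℂ} (hf : ∀ z, f.IsRoot z → z.im = 0)
    (hlead : f.leadingCoeff.im = 0) : f.map (starRingEnd ℂ) = f := by
  have hs := (IsAlgClosed.splits f).eq_prod_roots
  by_cases h0 : f = 0
  · simp [h0]
  conv_lhs => rw [hs]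
  conv_rhs => rw [hs]
  rw [Polynomial.map_mul, Polynomial.map_C, Complex.conj_eq_iff_im.2 hlead,
    Polynomial.map_multiset_prod, Multiset.map_map]
  congr 2
  refine Multiset.map_congr rfl fun z hz => ?_
  simp [Complex.conj_eq_iff_im.2 (hf z ((Polynomial.mem_roots h0).1 hz))]

theorem map_conj_eq_of_infinite {f : Polynomial ℂ} {s : Set ℝ} (hs : s.Infinite)
    (h : ∀ u ∈ s, (f.eval (u : ℂ)).im = 0) : f.map (starRingEnd ℂ) = f := by
  refine Polynomial.eq_of_infinite_eval_eq _ _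
    ((hs.image Complex.ofReal_injective.injOn).mono ?_)
  rintro _ ⟨u, hu, rfl⟩
  have := Polynomial.eval_map_apply (f := starRingEnd ℂ) (p := f) (u : ℂ)
  rw [Complex.conj_ofReal] at this
  rw [Set.mem_ofPred_eq, this]
  exact Complex.conj_eq_iff_im.2 (h u hu)

/-- The Wronskian of the derivatives of a pencil is real if the Wronskian of the pencil has only
real roots. -/
theorem map_conj_wronskianDet_derivative {a b : ℕ} (hab : b < a) {p q : Polynomial ℂ}
    (hp : p.Monic) (hq : q.Monic) (hpa : p.natDegree = a + 1) (hqb : q.natDegree = b + 1)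
    (hreal : ∀ z, (wronskianDet p q).IsRoot z → z.im = 0) :
    (wronskianDet (Polynomial.derivative p) (Polynomial.derivative q)).map (starRingEnd ℂ) =
      wronskianDet (Polynomial.derivative p) (Polynomial.derivative q) := by
  obtain ⟨n, z, hz, S, hS⟩ := exists_gaudin_eigenvalue hab p q hp hq hpa hqb
  have hzreal : ∀ i, (z i).im = 0 := fun i => hreal _ (by
    rw [hz, Polynomial.IsRoot, Polynomial.eval_mul, Polynomial.eval_prod,
      prod_eq_zero (mem_univ i) (by simp), mul_zero])
  refine map_conj_eq_of_infinite (s := (Complex.ofReal ⁻¹' (S : Set ℂ))ᶜ)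
    ((S.finite_toSet.preimage Complex.ofReal_injective.injOn).infinite_compl) fun u hu => ?_
  have hG := isHermitian_gaudin z u (fun i => Complex.conj_eq_iff_im.2 (hzreal i))
    (Complex.conj_ofReal u)
  have hM : (((a : ℂ) - b) • gaudin z u).IsHermitian := by
    rw [Matrix.IsHermitian, Matrix.conjTranspose_smul, hG.eq]
    simp
  simpa using im_eq_zero_of_det_sub_smul_one_eq_zero hM (hS u hu)

theorem exists_eq_C_mul_of_wronskianDet_eq_zero {K : Type*} [Field K] [CharZero K]
    {f g : Polynomial K} (hg : g ≠ 0) (h : wronskianDet f g = 0) :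
    ∃ c, f = Polynomial.C c * g := by
  let r := f - Polynomial.C (f.coeff g.natDegree / g.leadingCoeff) * g
  have hr : r.coeff g.natDegree = 0 := by
    simp [r, Polynomial.coeff_sub, Polynomial.leadingCoeff_ne_zero.2 hg]
  have hW : wronskianDet (Polynomial.X * r) (Polynomial.X * g) = 0 := by
    have : wronskianDet (Polynomial.X * r) (Polynomial.X * g) =
        Polynomial.X ^ 2 * wronskianDet f g := by
      simp only [wronskianDet, r, Polynomial.derivative_mul, Polynomial.derivative_sub,
        Polynomial.derivative_X, Polynomial.derivative_C]
      ring
    rw [this, h, mul_zero]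
  refine ⟨_, sub_eq_zero.1 (show r = 0 from ?_)⟩
  by_contra hr0
  have hc := coeff_wronskianDet (Polynomial.natDegree_X_mul hr0).le
    (Polynomial.natDegree_X_mul hg).le
  rw [hW, Polynomial.coeff_zero, Polynomial.coeff_X_mul, Polynomial.coeff_X_mul, eq_comm,
    mul_eq_zero, mul_eq_zero, sub_eq_zero, Nat.cast_inj] at hc
  rcases hc with hc | hc | hc
  · exact Polynomial.leadingCoeff_ne_zero.2 hr0 (by rwa [← hc] at hr)
  · exact Polynomial.leadingCoeff_ne_zero.2 hr0 hc
  · exact Polynomial.leadingCoeff_ne_zero.2 hg hc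

/-- The solutions of the second order linear differential equation of a pencil are the members of
the pencil. -/
theorem exists_eq_add_of_differential_equation {K : Type*} [Field K] [CharZero K]
    {p q y : Polynomial K} (hq : q ≠ 0) (hW : wronskianDet p q ≠ 0)
    (hy : wronskianDet p q * Polynomial.derivative (Polynomial.derivative y) -
      Polynomial.derivative (wronskianDet p q) * Polynomial.derivative y +
      wronskianDet (Polynomial.derivative p) (Polynomial.derivative q) * y = 0) :
    ∃ c d, y = Polynomial.C c * p + Polynomial.C d * q := by
  have h : wronskianDet (wronskianDet y q) (wronskianDet p q) = 0 := by
    calc wronskianDet (wronskianDet y q) (wronskianDet p q) = q * (wronskianDet p q *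
        Polynomial.derivative (Polynomial.derivative y) -
        Polynomial.derivative (wronskianDet p q) * Polynomial.derivative y +
        wronskianDet (Polynomial.derivative p) (Polynomial.derivative q) * y) := by
          simp only [wronskianDet, Polynomial.derivative_mul, Polynomial.derivative_sub]
          ring
      _ = 0 := by rw [hy, mul_zero]
  obtain ⟨c, hc⟩ := exists_eq_C_mul_of_wronskianDet_eq_zero hW h
  have h' : wronskianDet (y - Polynomial.C c * p) q = 0 := by
    have : wronskianDet (y - Polynomial.C c * p) q =
        wronskianDet y q - Polynomial.C c * wronskianDet p q := by
      simp only [wronskianDet, Polynomial.derivative_mul, Polynomial.derivative_sub,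
        Polynomial.derivative_C]
      ring
    rw [this, hc, sub_self]
  obtain ⟨d, hd⟩ := exists_eq_C_mul_of_wronskianDet_eq_zero hq h'
  exact ⟨c, d, by rw [← hd]; ring⟩

/-- A monic pencil whose Wronskian has only real roots is spanned by real polynomials. -/
theorem map_conj_eq_of_monic {p q : Polynomial ℂ} (hp : p.Monic) (hq : q.Monic)
    (hlt : q.natDegree < p.natDegree) (hW : wronskianDet p q ≠ 0)
    (hreal : ∀ z, (wronskianDet p q).IsRoot z → z.im = 0) :
    q.map (starRingEnd ℂ) = q ∧
      (p - Polynomial.C (p.coeff q.natDegree) * q).map (starRingEnd ℂ) =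
        p - Polynomial.C (p.coeff q.natDegree) * q := by
  have hWl : (wronskianDet p q).map (starRingEnd ℂ) = wronskianDet p q ∧
      (wronskianDet (Polynomial.derivative p) (Polynomial.derivative q)).map (starRingEnd ℂ) =
        wronskianDet (Polynomial.derivative p) (Polynomial.derivative q) := by
    obtain ⟨a, ha⟩ : ∃ a, p.natDegree = a + 1 := ⟨p.natDegree - 1, by omega⟩
    rcases hqb : q.natDegree with _ | b
    · rw [hq.natDegree_eq_zero.1 hqb] at hreal ⊢
      simp only [wronskianDet, Polynomial.derivative_one, Polynomial.derivative_zero,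
        mul_zero, mul_one, sub_zero, Polynomial.map_zero, and_true] at hreal ⊢
      refine map_conj_eq_of_forall_isRoot hreal ?_
      rw [Polynomial.leadingCoeff_derivative, hp.leadingCoeff]
      simp
    · have hab : b < a := by omega
      refine ⟨map_conj_eq_of_forall_isRoot hreal ?_,
        map_conj_wronskianDet_derivative hab hp hq ha hqb hreal⟩
      have hc := coeff_wronskianDet ha.le hqb.le
      rw [← ha, ← hqb, hp.coeff_natDegree, hq.coeff_natDegree, mul_one, mul_one] at hc
      have hν : (a : ℂ) - b ≠ 0 := sub_ne_zero.2 (by exact_mod_cast hab.ne')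
      have hn : (wronskianDet p q).natDegree = a + b + 1 :=
        Polynomial.natDegree_eq_of_le_of_coeff_ne_zero (natDegree_wronskianDet_le ha.le hqb.le)
          (by rwa [hc])
      rw [Polynomial.leadingCoeff, hn, hc]
      simp
  have hode : ∀ y, wronskianDet p q * Polynomial.derivative (Polynomial.derivative y) -
      Polynomial.derivative (wronskianDet p q) * Polynomial.derivative y +
      wronskianDet (Polynomial.derivative p) (Polynomial.derivative q) * y = 0 →
      ∃ c d, y.map (starRingEnd ℂ) = Polynomial.C c * p + Polynomial.C d * q := by
    intro y hy
    refine exists_eq_add_of_differential_equation hq.ne_zero hW ?_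
    have := congrArg (Polynomial.map (starRingEnd ℂ)) hy
    simpa only [Polynomial.map_add, Polynomial.map_sub, Polynomial.map_mul, Polynomial.map_zero,
      ← Polynomial.derivative_map, hWl.1, hWl.2] using this
  have hqp : q.coeff p.natDegree = 0 := Polynomial.coeff_eq_zero_of_natDegree_lt hlt
  have hpc : p.coeff p.natDegree = 1 := hp
  have hqc : q.coeff q.natDegree = 1 := hq
  constructor
  · obtain ⟨c, d, h⟩ := hode q (by
      simp only [wronskianDet, Polynomial.derivative_mul, Polynomial.derivative_sub]
      ring)
    have hc := congrArg (Polynomial.coeff · p.natDegree) h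
    have hd := congrArg (Polynomial.coeff · q.natDegree) h
    simp [hqp, hpc] at hc
    simp [hqc, ← hc] at hd
    simpa [← hc, ← hd] using h
  · obtain ⟨c, d, h⟩ := hode (p - Polynomial.C (p.coeff q.natDegree) * q) (by
      simp only [wronskianDet, Polynomial.derivative_mul, Polynomial.derivative_sub,
        Polynomial.derivative_C, zero_mul, zero_add]
      ring)
    have hc := congrArg (Polynomial.coeff · p.natDegree) h
    have hd := congrArg (Polynomial.coeff · q.natDegree) h
    simp only [Polynomial.coeff_map, Polynomial.coeff_sub, Polynomial.coeff_add,
      Polynomial.coeff_C_mul, hqp, hpc, mul_zero, sub_zero, add_zero, mul_one, map_one] at hc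
    simp only [Polynomial.coeff_map, Polynomial.coeff_sub, Polynomial.coeff_add,
      Polynomial.coeff_C_mul, hqc, mul_one, sub_self, map_zero, ← hc, one_mul] at hd
    rw [h, ← hc, eq_neg_of_add_eq_zero_right hd.symm]
    simp [sub_eq_add_neg]

theorem wronskianDet_linear_combination {R : Type*} [CommRing R] (p q : Polynomial R)
    (a b c d : R) :
    wronskianDet (Polynomial.C a * p + Polynomial.C b * q)
      (Polynomial.C c * p + Polynomial.C d * q) =
      Polynomial.C (a * d - b * c) * wronskianDet p q := by
  simp only [wronskianDet, Polynomial.derivative_add, Polynomial.derivative_C_mul,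
    Polynomial.C_sub, Polynomial.C_mul]
  ring

theorem exists_degree_lt_of_ne_zero {K : Type*} [Field K] {p q : Polynomial K} (hq : q ≠ 0) :
    ∃ a b c d : K, a * d - b * c ≠ 0 ∧
      (Polynomial.C c * p + Polynomial.C d * q).degree <
        (Polynomial.C a * p + Polynomial.C b * q).degree := by
  rcases lt_trichotomy p.degree q.degree with h | h | h
  · exact ⟨0, 1, 1, 0, by simp, by simpa using h⟩
  · refine ⟨0, 1, 1, -(p.leadingCoeff / q.leadingCoeff), by simp, ?_⟩
    have hp : p ≠ 0 := fun hp => hq (Polynomial.degree_eq_bot.1 (by simpa [hp] using h.symm))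
    have hc : p.leadingCoeff / q.leadingCoeff ≠ 0 :=
      div_ne_zero (Polynomial.leadingCoeff_ne_zero.2 hp) (Polynomial.leadingCoeff_ne_zero.2 hq)
    have := Polynomial.degree_sub_lt_left (p := p)
      (q := Polynomial.C (p.leadingCoeff / q.leadingCoeff) * q)
      (by rw [Polynomial.degree_C_mul hc, h]) hp (by simp [hq])
    simpa [sub_eq_add_neg, ← h] using this
  · exact ⟨1, 0, 0, 1, by simp, by simpa using h⟩

theorem exists_monic_natDegree_lt {K : Type*} [Field K] {p q : Polynomial K}
    (hW : wronskianDet p q ≠ 0) :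
    ∃ a b c d : K, a * d - b * c ≠ 0 ∧
      (Polynomial.C a * p + Polynomial.C b * q).Monic ∧
      (Polynomial.C c * p + Polynomial.C d * q).Monic ∧
      (Polynomial.C c * p + Polynomial.C d * q).natDegree <
        (Polynomial.C a * p + Polynomial.C b * q).natDegree := by
  have hq : q ≠ 0 := fun h => hW (by simp [h, wronskianDet])
  obtain ⟨a, b, c, d, hdet, hlt⟩ := exists_degree_lt_of_ne_zero (p := p) hq
  have hPQ := wronskianDet_linear_combination p q a b c d
  set P := Polynomial.C a * p + Polynomial.C b * q with hP
  set Q := Polynomial.C c * p + Polynomial.C d * q with hQ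
  have hPQ0 : wronskianDet P Q ≠ 0 := by
    rw [hPQ]
    exact mul_ne_zero (Polynomial.C_ne_zero.2 hdet) hW
  have hP0 : P ≠ 0 := fun h => hPQ0 (by simp [h, wronskianDet])
  have hQ0 : Q ≠ 0 := fun h => hPQ0 (by simp [h, wronskianDet])
  have hPl := inv_ne_zero (Polynomial.leadingCoeff_ne_zero.2 hP0)
  have hQl := inv_ne_zero (Polynomial.leadingCoeff_ne_zero.2 hQ0)
  have hscale : ∀ e x y : K, Polynomial.C (e * x) * p + Polynomial.C (e * y) * q =
      (Polynomial.C x * p + Polynomial.C y * q) * Polynomial.C e := by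
    intro e x y
    simp only [Polynomial.C_mul]
    ring
  refine ⟨P.leadingCoeff⁻¹ * a, P.leadingCoeff⁻¹ * b, Q.leadingCoeff⁻¹ * c,
    Q.leadingCoeff⁻¹ * d, ?_, ?_, ?_, ?_⟩
  · rw [show P.leadingCoeff⁻¹ * a * (Q.leadingCoeff⁻¹ * d) -
      P.leadingCoeff⁻¹ * b * (Q.leadingCoeff⁻¹ * c) =
      P.leadingCoeff⁻¹ * Q.leadingCoeff⁻¹ * (a * d - b * c) by ring]
    exact mul_ne_zero (mul_ne_zero hPl hQl) hdet
  · rw [hscale, ← hP]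
    exact Polynomial.monic_mul_leadingCoeff_inv hP0
  · rw [hscale, ← hQ]
    exact Polynomial.monic_mul_leadingCoeff_inv hQ0
  · rw [hscale, hscale, ← hP, ← hQ, Polynomial.natDegree_mul_C hPl, Polynomial.natDegree_mul_C hQl]
    exact Polynomial.natDegree_lt_natDegree hQ0 hlt

theorem im_coeff_eq_zero_of_map_conj_eq {f : Polynomial ℂ} (h : f.map (starRingEnd ℂ) = f)
    (m : ℕ) : (f.coeff m).im = 0 := by
  rw [← Complex.conj_eq_iff_im, ← Polynomial.coeff_map, h]

end RealRationalFunctions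

/-- **Theorem of Eremenko–Gabrielov.** Let `p, q ∈ ℂ[z]` be coprime with nonzero
Wronskian `W = p′q − pq′`, and suppose every complex root of `W` is real. Then there
is a Möbius transformation of the target, given by `a, b, c, d ∈ ℂ` with
`ad − bc ≠ 0`, such that both `a·p + b·q` and `c·p + d·q` have all coefficients real;
i.e., a rational function with only real critical points is essentially a quotient of
real polynomials. -/
theorem eremenko_gabrielov_real_rational (p q : Polynomial ℂ)
    (hco : IsCoprime p q)
    (hW : Polynomial.derivative p * q - p * Polynomial.derivative q ≠ 0)
    (hreal : ∀ z : ℂ,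
      (Polynomial.derivative p * q - p * Polynomial.derivative q).IsRoot z → z.im = 0) :
    ∃ a b c d : ℂ, a * d - b * c ≠ 0 ∧
      (∀ m : ℕ, ((Polynomial.C a * p + Polynomial.C b * q).coeff m).im = 0) ∧
      (∀ m : ℕ, ((Polynomial.C c * p + Polynomial.C d * q).coeff m).im = 0) := by
  obtain ⟨a, b, c, d, hdet, hP, hQ, hlt⟩ := exists_monic_natDegree_lt hW
  have hPQ := wronskianDet_linear_combination p q a b c d
  obtain ⟨hQr, hPr⟩ := map_conj_eq_of_monic hP hQ hlt
    (by rw [hPQ]; exact mul_ne_zero (Polynomial.C_ne_zero.2 hdet) hW)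
    (fun z hz => hreal z (by
      rw [hPQ, Polynomial.IsRoot, Polynomial.eval_mul, Polynomial.eval_C] at hz
      exact (mul_eq_zero.1 hz).resolve_left hdet))
  set e := (Polynomial.C a * p + Polynomial.C b * q).coeff
    (Polynomial.C c * p + Polynomial.C d * q).natDegree
  refine ⟨a - e * c, b - e * d, c, d, ?_, fun m => ?_, im_coeff_eq_zero_of_map_conj_eq hQr⟩
  · convert hdet using 1
    ring
  · convert im_coeff_eq_zero_of_map_conj_eq hPr m using 3
    simp only [Polynomial.C_sub, Polynomial.C_mul]
    ring
end

section
/- Let 1 ≤ k ≤ n, let Λ₁,…,Λ_k : ℂⁿ → ℂ be linearly independent linear functionals, and let f_i ∈ ℂ[t] be the unique polynomial of degree ≤ n−1 with f_i(s) = Λ_i(γ(s)) for all s ∈ ℂ, where γ is the rational normal curve in ℂⁿ. Set H := ⋂_{i=1}^k ker Λ_i, an (n−k)-dimensional subspace of ℂⁿ. Then for every s ∈ ℂ: Wr(f₁,…,f_k)(s) = 0 if and only if H ∩ F_k(s) ≠ {0}. [The unnumbered Lemma of Section 3 identifying roots of the Wronskian with membership in the hypersurface Schubert variety at the osculating flag.]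 -/
/-- The `m`-th derivative of the rational normal curve `γ(t) = (1, t, t²/2!, …, t^{n-1}/(n-1)!)`
in `ℂⁿ`, evaluated at `t`. -/
noncomputable def gammaVec (n m : ℕ) (t : ℂ) : Fin n → ℂ :=
  fun i => Polynomial.eval t
    (Polynomial.derivative^[m]
      (Polynomial.C ((Nat.factorial (i : ℕ) : ℂ))⁻¹ * Polynomial.X ^ (i : ℕ)))

/-- The `i`-dimensional subspace `F_i(t)` osculating the rational normal curve at `γ(t)`. -/
noncomputable def oscFlag (n i : ℕ) (t : ℂ) : Submodule ℂ (Fin n → ℂ) :=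
  Submodule.span ℂ (Set.range fun m : Fin i => gammaVec n (m : ℕ) t)

/-- The Wronskian of polynomials `f 0, …, f (k-1)`. -/
noncomputable def Wr {k : ℕ} (f : Fin k → Polynomial ℂ) : Polynomial ℂ :=
  Matrix.det (Matrix.of fun i j : Fin k => Polynomial.derivative^[(i : ℕ)] (f j))

theorem gammaVec_eq_zero_of_lt {n m : ℕ} (t : ℂ) {i : Fin n} (h : (i : ℕ) < m) :
    gammaVec n m t i = 0 := by
  simp [gammaVec, Polynomial.iterate_derivative_C_mul,
    Polynomial.iterate_derivative_X_pow_eq_natCast_mul, Nat.descFactorial_of_lt h]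

theorem gammaVec_self {n : ℕ} (t : ℂ) (i : Fin n) : gammaVec n (i : ℕ) t i = 1 := by
  have h : ((i : ℕ).factorial : ℂ) ≠ 0 := Nat.cast_ne_zero.2 (Nat.factorial_ne_zero _)
  simp [gammaVec, Polynomial.iterate_derivative_C_mul,
    Polynomial.iterate_derivative_X_pow_eq_natCast_mul, Nat.descFactorial_self, h]

/-- The first `k ≤ n` derivatives of the rational normal curve are linearly independent. -/
theorem linearIndependent_gammaVec {k n : ℕ} (hkn : k ≤ n) (t : ℂ) :
    LinearIndependent ℂ fun m : Fin k => gammaVec n (m : ℕ) t := by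
  rw [Fintype.linearIndependent_iff]
  intro v hv
  let A : Matrix (Fin k) (Fin k) ℂ :=
    Matrix.of fun m i => gammaVec n (m : ℕ) t (Fin.castLE hkn i)
  have htri : A.IsUpperTriangular := fun m i h => gammaVec_eq_zero_of_lt t h
  have hdet : A.det = 1 := by
    rw [Matrix.det_of_isUpperTriangular htri]
    exact Finset.prod_eq_one fun i _ => gammaVec_self t (Fin.castLE hkn i)
  have hA : Matrix.vecMul v A = 0 := by
    ext i
    simpa [A, Matrix.vecMul, dotProduct] using congrFun hv (Fin.castLE hkn i)
  exact congrFun (Matrix.eq_zero_of_vecMul_eq_zero (by simp [hdet]) hA)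

/-- Differentiating `Λ ∘ γ` amounts to applying `Λ` to the derivatives of `γ`. -/
theorem eval_iterate_derivative_eq_apply_gammaVec {n : ℕ} (L : (Fin n → ℂ) →ₗ[ℂ] ℂ)
    (p : Polynomial ℂ) (hp : ∀ s : ℂ, p.eval s = L (gammaVec n 0 s)) (m : ℕ) (s : ℂ) :
    (Polynomial.derivative^[m] p).eval s = L (gammaVec n m s) := by
  have hL : ∀ v : Fin n → ℂ, L v = ∑ i, L (Pi.single i 1) * v i := fun v => by
    rw [LinearMap.pi_apply_eq_sum_univ L v]
    refine Finset.sum_congr rfl fun i _ => ?_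
    rw [smul_eq_mul, mul_comm]
    congr 2
    ext j
    simp [Pi.single_apply, eq_comm]
  have hsum : p = ∑ i : Fin n, Polynomial.C (L (Pi.single i 1)) *
      (Polynomial.C ((Nat.factorial (i : ℕ) : ℂ))⁻¹ * Polynomial.X ^ (i : ℕ)) := by
    refine Polynomial.funext fun x => ?_
    rw [hp, hL]
    simp [gammaVec, Polynomial.eval_finsetSum]
  rw [hL, hsum, Polynomial.iterate_derivative_sum, Polynomial.eval_finsetSum]
  refine Finset.sum_congr rfl fun i _ => ?_
  rw [Polynomial.iterate_derivative_C_mul, Polynomial.eval_mul, Polynomial.eval_C, gammaVec]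

/-- **Roots of the Wronskian and the hypersurface Schubert condition.**
Let `Λ₁, …, Λ_k` be linearly independent linear functionals on `ℂⁿ` and let `f_i` be the
polynomial with `f_i(s) = Λ_i(γ(s))` for all `s`, where `γ` is the rational normal curve.
Set `H := ⋂ ker Λ_i`.  Then `s` is a root of the Wronskian `Wr(f₁, …, f_k)` if and only
if `H ∩ F_k(s) ≠ {0}`. -/
theorem wronskian_root_iff_schubert (k n : ℕ) (hk : 1 ≤ k) (hkn : k ≤ n)
    (Λ : Fin k → ((Fin n → ℂ) →ₗ[ℂ] ℂ)) (hΛ : LinearIndependent ℂ Λ)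
    (f : Fin k → Polynomial ℂ)
    (hf : ∀ i, ∀ s : ℂ, (f i).eval s = Λ i (gammaVec n 0 s)) :
    ∀ s : ℂ, (Wr f).eval s = 0 ↔ (⨅ i, LinearMap.ker (Λ i)) ⊓ oscFlag n k s ≠ ⊥ := by
  intro s
  let M : Matrix (Fin k) (Fin k) ℂ := Matrix.of fun i j => Λ j (gammaVec n (i : ℕ) s)
  have hdet : (Wr f).eval s = M.det := by
    rw [Wr, ← Polynomial.coe_evalRingHom, RingHom.map_det]
    congr 1
    ext i j
    exact eval_iterate_derivative_eq_apply_gammaVec (Λ j) (f j) (hf j) i s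
  have hM : ∀ (v : Fin k → ℂ) (j : Fin k),
      Matrix.vecMul v M j = Λ j (∑ i, v i • gammaVec n (i : ℕ) s) := fun v j => by
    simp [M, Matrix.vecMul, dotProduct]
  rw [hdet, ← Matrix.exists_vecMul_eq_zero_iff, Submodule.ne_bot_iff]
  constructor
  · rintro ⟨v, hv, hvM⟩
    refine ⟨∑ i, v i • gammaVec n (i : ℕ) s, ⟨?_, ?_⟩, fun h => hv ?_⟩
    · refine (Submodule.mem_iInf _).2 fun j => LinearMap.mem_ker.2 ?_
      rw [← hM, hvM, Pi.zero_apply]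
    · exact Submodule.sum_mem _ fun i _ =>
        Submodule.smul_mem _ _ (Submodule.subset_span ⟨i, rfl⟩)
    · exact funext (Fintype.linearIndependent_iff.1 (linearIndependent_gammaVec hkn s) v h)
  · rintro ⟨x, ⟨hker, hosc⟩, hx⟩
    obtain ⟨v, rfl⟩ := (Submodule.mem_span_range_iff_exists_fun ℂ).1 hosc
    refine ⟨v, fun h => hx (by simp [h]), funext fun j => ?_⟩
    rw [hM]
    exact LinearMap.mem_ker.1 ((Submodule.mem_iInf _).1 hker j)
end

section
/- Let 1 ≤ k ≤ n−1, let t₁,…,t_{n−1} be distinct complex numbers, and set f(t) := ∏_{i=1}^{n−1}(t − t_i). Then there is a bijection between (i) the set of k-dimensional ℂ-subspaces H ⊆ ℂⁿ satisfying dim(H ∩ F_{i+1}(∞)) ≥ i for i = 1,…,k−1 and H ∩ F_{n−k}(t_i) ≠ {0} for i = 1,…,n−1, and (ii) the set of pairs (g,h) of polynomials in ℂ[t] with g monic of degree n−k−1, deg h = k−1, and g·h = f′ (the derivative of f). [Theorem identifying solutions of the osculating instance of the Schubert problem (□_{k,n}, □^{n−1}) with factorizations of f′.] -/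
/-- `F_i(∞)`: the span of the last `i` standard basis vectors of `ℂⁿ`, realized as the
subspace of vectors whose coordinates `j` with `j + i < n` all vanish. -/
noncomputable def infFlag (n i : ℕ) : Submodule ℂ (Fin n → ℂ) :=
  Submodule.pi Set.univ fun j : Fin n =>
    if (j : ℕ) + i < n then (⊥ : Submodule ℂ ℂ) else ⊤

open Polynomial Module

/-- The bilinear concomitant `∑_{j < k} (-1)^(k-1-j) h^{(k-1-j)} q^{(j)}`. -/
noncomputable def concomitant : ℕ → ℂ[X] →ₗ[ℂ] ℂ[X] →ₗ[ℂ] ℂ[X]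
  | 0 => 0
  | k + 1 => (LinearMap.mul ℂ ℂ[X]).compl₂ (derivative ^ k) - (concomitant k).comp derivative

lemma concomitant_succ (k : ℕ) (h q : ℂ[X]) :
    concomitant (k + 1) h q = h * derivative^[k] q - concomitant k (derivative h) q := by
  simp [concomitant, Module.End.pow_apply]

lemma derivative_concomitant (k : ℕ) (h q : ℂ[X]) :
    derivative (concomitant k h q) =
      h * derivative^[k] q - (-1) ^ k * (derivative^[k] h * q) := by
  induction k generalizing h with
  | zero => simp [concomitant]
  | succ k ih =>
    rw [concomitant_succ, derivative_sub, ih, derivative_mul, Function.iterate_succ_apply' _ k q,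
      Function.iterate_succ_apply _ k h]
    ring

lemma derivative_concomitant_of_mem {k : ℕ} {h : ℂ[X]} (hh : h ∈ degreeLT ℂ k) (q : ℂ[X]) :
    derivative (concomitant k h q) = h * derivative^[k] q := by
  rw [derivative_concomitant, iterate_derivative_eq_zero_of_degree_lt (mem_degreeLT.1 hh)]
  simp

lemma exists_concomitant_eq_C {k : ℕ} {h q : ℂ[X]} (hh : h ∈ degreeLT ℂ k)
    (hq : q ∈ degreeLT ℂ k) : ∃ c, concomitant k h q = C c := by
  have := derivative_concomitant_of_mem hh q
  rw [iterate_derivative_eq_zero_of_degree_lt (mem_degreeLT.1 hq), mul_zero] at this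
  exact ⟨_, eq_C_of_natDegree_eq_zero (derivative_eq_zero.1 this)⟩

lemma eval_concomitant_of_pow_dvd {k : ℕ} {q : ℂ[X]} {s : ℂ} (hq : (X - C s) ^ k ∣ q)
    (h : ℂ[X]) : (concomitant k h q).eval s = 0 := by
  induction k generalizing h with
  | zero => simp [concomitant]
  | succ k ih =>
    have hd := pow_sub_dvd_iterate_derivative_of_pow_dvd k hq
    rw [Nat.add_sub_cancel_left, pow_one, dvd_iff_isRoot, IsRoot.def] at hd
    rw [concomitant_succ, eval_sub, eval_mul, hd, ih ((pow_dvd_pow _ k.le_succ).trans hq)]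
    simp

lemma natDegree_concomitant_le (k m : ℕ) {h q : ℂ[X]} (hh : h.natDegree + 1 ≤ k)
    (hq : q.natDegree ≤ m) : (concomitant k h q).natDegree ≤ m := by
  induction k generalizing h with
  | zero => simp [concomitant]
  | succ k ih =>
    rw [concomitant_succ]
    have h0 := natDegree_iterate_derivative q k
    rcases Nat.eq_zero_or_pos h.natDegree with h1 | h1
    · rw [derivative_of_natDegree_zero h1, map_zero, LinearMap.zero_apply, sub_zero]
      exact natDegree_mul_le.trans (by omega)
    refine (natDegree_sub_le _ _).trans (max_le ?_ (ih ?_))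
    · by_cases hqk : q.natDegree < k
      · simp [iterate_derivative_eq_zero hqk]
      · exact natDegree_mul_le.trans (by omega)
    · have := natDegree_derivative_lt h1.ne'
      omega

lemma exists_concomitant_ne_zero {k : ℕ} {h : ℂ[X]} (hh : h ∈ degreeLT ℂ k) (h0 : h ≠ 0) :
    ∃ u ∈ degreeLT ℂ k, concomitant k h u ≠ 0 := by
  induction k generalizing h with
  | zero => exact absurd (by simpa [mem_degreeLT, Nat.WithBot.lt_zero_iff] using hh) h0
  | succ k ih =>
    by_cases hd : derivative h = 0
    · refine ⟨X ^ k, ?_, ?_⟩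
      · rw [mem_degreeLT, degree_X_pow]
        exact_mod_cast k.lt_succ_self
      · rw [concomitant_succ, hd]
        simp [iterate_derivative_X_pow_eq_natCast_mul, Nat.descFactorial_self, h0,
          Nat.factorial_ne_zero]
    · have hlt : derivative h ∈ degreeLT ℂ k := by
        rw [mem_degreeLT] at hh ⊢
        rw [degree_lt_iff_coeff_zero] at hh ⊢
        intro m hm
        rw [coeff_derivative, hh (m + 1) (by omega), zero_mul]
      obtain ⟨u, hu, hne⟩ := ih hlt hd
      refine ⟨u, degreeLT_mono k.le_succ hu, ?_⟩
      rw [concomitant_succ, iterate_derivative_eq_zero_of_degree_lt (mem_degreeLT.1 hu)]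
      simpa using hne

lemma exists_derivative_eq {m : ℕ} {g : ℂ[X]} (hg : g ∈ degreeLT ℂ m) :
    ∃ q ∈ degreeLT ℂ (m + 1), derivative q = g := by
  rcases eq_or_ne g 0 with rfl | h0
  · exact ⟨0, zero_mem _, derivative_zero⟩
  refine ⟨∑ i ∈ Finset.range m, monomial (i + 1) (g.coeff i / (i + 1)), ?_, ?_⟩
  · refine Submodule.sum_mem _ fun i hi => mem_degreeLT.2 ((degree_monomial_le _ _).trans_lt ?_)
    have := Finset.mem_range.1 hi
    exact_mod_cast Nat.succ_lt_succ this
  · conv_rhs => rw [as_sum_range' g m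
      ((natDegree_lt_iff_degree_lt h0).2 (mem_degreeLT.1 hg))]
    rw [derivative_sum]
    refine Finset.sum_congr rfl fun i _ => ?_
    rw [derivative_monomial]
    congr 1
    push_cast
    field_simp [Nat.cast_add_one_ne_zero i]

lemma exists_iterate_derivative_eq (k : ℕ) {m : ℕ} {g : ℂ[X]} (hg : g ∈ degreeLT ℂ m) :
    ∃ q ∈ degreeLT ℂ (m + k), derivative^[k] q = g := by
  induction k with
  | zero => exact ⟨g, hg, rfl⟩
  | succ k ih =>
    obtain ⟨q, hq, rfl⟩ := ih
    obtain ⟨p, hp, rfl⟩ := exists_derivative_eq hq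
    exact ⟨p, hp, rfl⟩

lemma finrank_degreeLT (m : ℕ) : finrank ℂ (degreeLT ℂ m) = m := by
  simp [(degreeLTEquiv ℂ m).finrank_eq]

instance finiteDimensional_degreeLT (m : ℕ) : FiniteDimensional ℂ (degreeLT ℂ m) :=
  (degreeLTEquiv ℂ m).symm.finiteDimensional

lemma finrank_map_add_finrank_inf_ker {V W : Type*} [AddCommGroup V] [Module ℂ V]
    [AddCommGroup W] [Module ℂ W] (T : V →ₗ[ℂ] W) (K : Submodule ℂ V) [FiniteDimensional ℂ K] :
    finrank ℂ (K.map T) + finrank ℂ ↥(K ⊓ LinearMap.ker T) = finrank ℂ K := by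
  rw [← LinearMap.finrank_range_add_finrank_ker (T.domRestrict K), LinearMap.range_domRestrict,
    LinearMap.ker_domRestrict, ← Submodule.map_comap_subtype,
    Submodule.finrank_map_subtype_eq]

/-- The polynomials of degree at most `N` whose concomitant with `h` is a multiple of `f`. -/
noncomputable def concomitantSpace (k N : ℕ) (f h : ℂ[X]) : Submodule ℂ ℂ[X] :=
  degreeLT ℂ (N + 1) ⊓ (Submodule.span ℂ {f}).comap (concomitant k h)

/-- The translation to polynomials of the Schubert conditions: `G` consists of polynomials of
degree at most `N`, has dimension `k`, is in special position with respect to the degree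
filtration, and contains a nonzero polynomial vanishing to order `k` at each point `t i`. -/
structure IsOsculatingSolution (k N : ℕ) (t : Fin N → ℂ) (G : Submodule ℂ ℂ[X]) : Prop where
  le_degreeLT : G ≤ degreeLT ℂ (N + 1)
  finrank_eq : finrank ℂ G = k
  le_finrank_inf : ∀ i : ℕ, 1 ≤ i → i ≤ k - 1 → i ≤ finrank ℂ ↥(G ⊓ degreeLT ℂ (i + 1))
  exists_pow_dvd : ∀ i, ∃ q ∈ G, q ≠ 0 ∧ (X - C (t i)) ^ k ∣ q

lemma mem_degreeLT_of_iterate_derivative_eq_zero {k : ℕ} {q : ℂ[X]}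
    (hq : derivative^[k] q = 0) : q ∈ degreeLT ℂ k := by
  rw [mem_degreeLT, degree_lt_iff_coeff_zero]
  intro m hm
  have := congrArg (fun p => coeff p (m - k)) hq
  simp only [coeff_iterate_derivative, coeff_zero, Nat.sub_add_cancel hm, smul_eq_zero,
    Nat.descFactorial_eq_zero_iff_lt] at this
  exact this.resolve_left (by omega)

lemma mem_degreeLT_of_concomitant_eq_zero {k : ℕ} {h q : ℂ[X]} (hh : h ∈ degreeLT ℂ k)
    (h0 : h ≠ 0) (hq : concomitant k h q = 0) : q ∈ degreeLT ℂ k := by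
  have := derivative_concomitant_of_mem hh q
  rw [hq, derivative_zero, eq_comm, mul_eq_zero] at this
  exact mem_degreeLT_of_iterate_derivative_eq_zero (this.resolve_left h0)

lemma map_concomitant_degreeLT_le {k m : ℕ} {h : ℂ[X]} (hh : h ∈ degreeLT ℂ k) (hm : m ≤ k) :
    (degreeLT ℂ m).map (concomitant k h) ≤ Submodule.span ℂ {1} := by
  rintro _ ⟨q, hq, rfl⟩
  obtain ⟨c, hc⟩ := exists_concomitant_eq_C hh (degreeLT_mono hm hq)
  exact Submodule.mem_span_singleton.2 ⟨c, by rw [hc, smul_eq_C_mul, mul_one]⟩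

lemma one_mem_map_concomitant {k : ℕ} {h : ℂ[X]} (hh : h ∈ degreeLT ℂ k) (h0 : h ≠ 0) :
    (1 : ℂ[X]) ∈ (degreeLT ℂ k).map (concomitant k h) := by
  obtain ⟨u, hu, hne⟩ := exists_concomitant_ne_zero hh h0
  obtain ⟨c, hc⟩ := exists_concomitant_eq_C hh hu
  have hc0 : c ≠ 0 := by
    rintro rfl
    exact hne (by simpa using hc)
  refine ⟨c⁻¹ • u, Submodule.smul_mem _ _ hu, ?_⟩
  rw [map_smul, hc, smul_C, smul_eq_mul, inv_mul_cancel₀ hc0, C_1]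

lemma finrank_degreeLT_inf_ker {k : ℕ} {h : ℂ[X]} (hh : h ∈ degreeLT ℂ k) (h0 : h ≠ 0) :
    finrank ℂ ↥(degreeLT ℂ k ⊓ LinearMap.ker (concomitant k h)) + 1 = k := by
  have hmap : (degreeLT ℂ k).map (concomitant k h) = Submodule.span ℂ {1} :=
    le_antisymm (map_concomitant_degreeLT_le hh le_rfl)
      ((Submodule.span_singleton_le_iff_mem _ _).2 (one_mem_map_concomitant hh h0))
  have := finrank_map_add_finrank_inf_ker (concomitant k h) (degreeLT ℂ k)
  rw [hmap, finrank_span_singleton one_ne_zero, finrank_degreeLT] at this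
  omega

lemma exists_concomitant_eq {k N : ℕ} {f g h : ℂ[X]} (hkN : k ≤ N)
    (hg : g ∈ degreeLT ℂ (N + 1 - k)) (hh : h ∈ degreeLT ℂ k) (h0 : h ≠ 0)
    (hgh : g * h = derivative f) :
    ∃ q ∈ degreeLT ℂ (N + 1), derivative^[k] q = g ∧ concomitant k h q = f := by
  obtain ⟨q, hq, hqg⟩ := exists_iterate_derivative_eq k hg
  rw [Nat.sub_add_cancel (by omega)] at hq
  have hd : derivative (concomitant k h q - f) = 0 := by
    rw [derivative_sub, derivative_concomitant_of_mem hh, hqg, ← hgh]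
    ring
  obtain ⟨u, hu, hu1⟩ := one_mem_map_concomitant hh h0
  have hc := eq_C_of_natDegree_eq_zero (derivative_eq_zero.1 hd)
  set c := (concomitant k h q - f).coeff 0
  refine ⟨q - c • u,
    Submodule.sub_mem _ hq (Submodule.smul_mem _ _ (degreeLT_mono (by omega) hu)), ?_, ?_⟩
  · rw [iterate_derivative_sub, iterate_derivative_smul, hqg,
      iterate_derivative_eq_zero_of_degree_lt (mem_degreeLT.1 hu), smul_zero, sub_zero]
  · rw [map_sub, map_smul, hu1, smul_eq_C_mul, mul_one, ← hc]
    ring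

lemma finrank_concomitantSpace {k N : ℕ} {f g h : ℂ[X]} (hkN : k ≤ N) (hf : 0 < f.natDegree)
    (hg : g ∈ degreeLT ℂ (N + 1 - k)) (hh : h ∈ degreeLT ℂ k) (h0 : h ≠ 0)
    (hgh : g * h = derivative f) : finrank ℂ (concomitantSpace k N f h) = k := by
  have : FiniteDimensional ℂ (concomitantSpace k N f h) :=
    Submodule.finiteDimensional_of_le inf_le_left
  have hmap : (concomitantSpace k N f h).map (concomitant k h) = Submodule.span ℂ {f} := by
    refine le_antisymm (Submodule.map_le_iff_le_comap.2 inf_le_right) ?_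
    obtain ⟨q, hq, -, hqf⟩ := exists_concomitant_eq hkN hg hh h0 hgh
    refine (Submodule.span_singleton_le_iff_mem _ _).2 ⟨q, ⟨hq, ?_⟩, hqf⟩
    simp only [SetLike.mem_coe, Submodule.mem_comap, hqf, Submodule.mem_span_singleton_self]
  have hker : concomitantSpace k N f h ⊓ LinearMap.ker (concomitant k h) =
      degreeLT ℂ k ⊓ LinearMap.ker (concomitant k h) := by
    ext q
    constructor
    · rintro ⟨-, h2⟩
      exact ⟨mem_degreeLT_of_concomitant_eq_zero hh h0 h2, h2⟩
    · rintro ⟨h1, h2⟩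
      refine ⟨⟨degreeLT_mono (by omega) h1, ?_⟩, h2⟩
      simp only [SetLike.mem_coe, Submodule.mem_comap, LinearMap.mem_ker.1 h2, zero_mem]
  have hsum := finrank_map_add_finrank_inf_ker (concomitant k h) (concomitantSpace k N f h)
  rw [hmap, hker, finrank_span_singleton (by rintro rfl; simp at hf)] at hsum
  have := finrank_degreeLT_inf_ker hh h0
  omega

lemma isOsculatingSolution_concomitantSpace {k N : ℕ} {t : Fin N → ℂ} {g h : ℂ[X]}
    (hk : 1 ≤ k) (hkN : k ≤ N) (hg : g ∈ degreeLT ℂ (N + 1 - k)) (hh : h ∈ degreeLT ℂ k)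
    (h0 : h ≠ 0) (hgh : g * h = derivative (∏ i, (X - C (t i)))) :
    IsOsculatingSolution k N t (concomitantSpace k N (∏ i, (X - C (t i))) h) := by
  have hfN : (∏ i, (X - C (t i))).natDegree = N := by
    rw [natDegree_finsetProd_X_sub_C_eq_card]
    simp
  have hf0 : (∏ i, (X - C (t i))) ≠ 0 := (monic_prod_X_sub_C _ _).ne_zero
  refine ⟨inf_le_left, finrank_concomitantSpace hkN (by omega) hg hh h0 hgh, ?_, ?_⟩
  · intro i hi hik
    have hle : degreeLT ℂ (i + 1) ⊓ LinearMap.ker (concomitant k h) ≤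
        concomitantSpace k N (∏ i, (X - C (t i))) h ⊓ degreeLT ℂ (i + 1) := by
      rintro q ⟨h1, h2⟩
      refine ⟨⟨degreeLT_mono (by omega) h1, ?_⟩, h1⟩
      simp only [SetLike.mem_coe, Submodule.mem_comap, LinearMap.mem_ker.1 h2, zero_mem]
    have : FiniteDimensional ℂ
        ↥(concomitantSpace k N (∏ i, (X - C (t i))) h ⊓ degreeLT ℂ (i + 1)) :=
      Submodule.finiteDimensional_of_le inf_le_right
    have h1 := Submodule.finrank_mono hle
    have h2 := finrank_map_add_finrank_inf_ker (concomitant k h) (degreeLT ℂ (i + 1))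
    have h3 := Submodule.finrank_mono
      (map_concomitant_degreeLT_le hh (show i + 1 ≤ k by omega))
    rw [finrank_span_singleton one_ne_zero] at h3
    rw [finrank_degreeLT] at h2
    omega
  · intro i
    obtain ⟨q, hq, -, hqf⟩ := exists_concomitant_eq hkN hg hh h0 hgh
    have hmon : ((X - C (t i)) ^ k).Monic := (monic_X_sub_C _).pow k
    have hr : q %ₘ (X - C (t i)) ^ k ∈ degreeLT ℂ k := by
      rw [mem_degreeLT]
      simpa [degree_pow] using degree_modByMonic_lt q hmon
    have hdvd : (X - C (t i)) ^ k ∣ q - q %ₘ (X - C (t i)) ^ k :=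
      ⟨_, sub_eq_of_eq_add' (modByMonic_add_div q _).symm⟩
    obtain ⟨c, hc⟩ := exists_concomitant_eq_C hh hr
    have hev := eval_concomitant_of_pow_dvd hdvd h
    have hfi : (∏ i, (X - C (t i))).eval (t i) = 0 := by
      rw [eval_prod]
      exact Finset.prod_eq_zero (Finset.mem_univ i) (by simp)
    rw [map_sub, hqf, hc, eval_sub, eval_C, hfi, zero_sub, neg_eq_zero] at hev
    have hcon : concomitant k h (q - q %ₘ (X - C (t i)) ^ k) = ∏ i, (X - C (t i)) := by
      rw [map_sub, hqf, hc, hev, C_0, sub_zero]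
    refine ⟨_, ⟨Submodule.sub_mem _ hq (degreeLT_mono (by omega) hr), ?_⟩, ?_, hdvd⟩
    · simp only [SetLike.mem_coe, Submodule.mem_comap, hcon, Submodule.mem_span_singleton_self]
    · intro hz
      rw [hz, map_zero] at hcon
      exact hf0 hcon.symm

lemma eq_of_concomitantSpace_eq {k N : ℕ} {f g₁ h₁ g₂ h₂ : ℂ[X]} (hkN : k ≤ N)
    (hm₁ : g₁.Monic) (hg₁ : g₁ ∈ degreeLT ℂ (N + 1 - k)) (hh₁ : h₁ ∈ degreeLT ℂ k) (h0₁ : h₁ ≠ 0)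
    (hgh₁ : g₁ * h₁ = derivative f) (hm₂ : g₂.Monic) (hh₂ : h₂ ∈ degreeLT ℂ k) (h0₂ : h₂ ≠ 0)
    (hgh₂ : g₂ * h₂ = derivative f)
    (heq : concomitantSpace k N f h₁ = concomitantSpace k N f h₂) : g₁ = g₂ ∧ h₁ = h₂ := by
  obtain ⟨q, hq, hqg, hqf⟩ := exists_concomitant_eq hkN hg₁ hh₁ h0₁ hgh₁
  have hmem : q ∈ concomitantSpace k N f h₁ := by
    refine ⟨hq, ?_⟩
    simp only [SetLike.mem_coe, Submodule.mem_comap, hqf, Submodule.mem_span_singleton_self]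
  rw [heq] at hmem
  obtain ⟨c, hc⟩ := Submodule.mem_span_singleton.1 hmem.2
  have hd := congrArg derivative hc
  rw [derivative_smul, derivative_concomitant_of_mem hh₂, hqg, ← hgh₂, mul_comm h₂,
    ← smul_mul_assoc] at hd
  have hg := mul_right_cancel₀ h0₂ hd
  have hlead := congrArg leadingCoeff hg
  rw [smul_eq_C_mul, leadingCoeff_mul, leadingCoeff_C, hm₁.leadingCoeff, hm₂.leadingCoeff,
    mul_one] at hlead
  rw [hlead, one_smul] at hg
  refine ⟨hg.symm, mul_left_cancel₀ hm₁.ne_zero ?_⟩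
  rw [hgh₁, ← hgh₂, hg]

lemma exists_concomitant_eq_zero {k : ℕ} (W : Submodule ℂ ℂ[X]) (hW : W ≤ degreeLT ℂ k)
    (hlt : finrank ℂ W < k) :
    ∃ h ∈ degreeLT ℂ k, h ≠ 0 ∧ ∀ q ∈ W, concomitant k h q = 0 := by
  have : FiniteDimensional ℂ W := Submodule.finiteDimensional_of_le hW
  let Φ : degreeLT ℂ k →ₗ[ℂ] (W →ₗ[ℂ] ℂ) :=
    ((concomitant k).compr₂ (lcoeff ℂ 0)).domRestrict₁₂ (degreeLT ℂ k) W
  have hker : LinearMap.ker Φ ≠ ⊥ := by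
    apply LinearMap.ker_ne_bot_of_finrank_lt
    rw [finrank_degreeLT]
    exact (Subspace.dual_finrank_eq (K := ℂ) (V := W)).trans_lt hlt
  obtain ⟨h, hh, hne⟩ := Submodule.exists_mem_ne_zero_of_ne_bot hker
  refine ⟨h, h.2, by simpa using hne, fun q hq => ?_⟩
  obtain ⟨c, hc⟩ := exists_concomitant_eq_C h.2 (hW hq)
  have h1 : (concomitant k h q).coeff 0 = 0 := LinearMap.congr_fun (LinearMap.mem_ker.1 hh) ⟨q, hq⟩
  rw [hc, coeff_C_zero] at h1
  rw [hc, h1, C_0]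

lemma exists_factorization_of_isOsculatingSolution {k N : ℕ} {t : Fin N → ℂ}
    (ht : Function.Injective t) (hk : 1 ≤ k) (hkN : k ≤ N) {G : Submodule ℂ ℂ[X]}
    (hG : IsOsculatingSolution k N t G) :
    ∃ g h : ℂ[X], g.Monic ∧ g.degree = (N - k : ℕ) ∧ h.degree = (k - 1 : ℕ) ∧
      g * h = derivative (∏ i, (X - C (t i))) ∧
      concomitantSpace k N (∏ i, (X - C (t i))) h = G := by
  set f := ∏ i, (X - C (t i)) with hf
  have hfN : f.natDegree = N := by
    rw [hf, natDegree_finsetProd_X_sub_C_eq_card]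
    simp
  have hf0 : f ≠ 0 := (monic_prod_X_sub_C _ _).ne_zero
  have : FiniteDimensional ℂ G := Submodule.finiteDimensional_of_le hG.le_degreeLT
  have hnot : ∀ i q, q ≠ 0 → (X - C (t i)) ^ k ∣ q → q ∉ degreeLT ℂ k := by
    intro i q hq hdvd hmem
    have h1 := degree_le_of_dvd hdvd hq
    rw [degree_pow, degree_X_sub_C, nsmul_one] at h1
    exact absurd (mem_degreeLT.1 hmem) (not_lt.2 h1)
  obtain ⟨q, hqG, hq0, hqd⟩ := hG.exists_pow_dvd ⟨0, by omega⟩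
  have hqk := hnot _ _ hq0 hqd
  have hlt : finrank ℂ ↥(G ⊓ degreeLT ℂ k) < k := by
    conv_rhs => rw [← hG.finrank_eq]
    exact Submodule.finrank_lt_finrank_of_lt
      (lt_of_le_of_ne inf_le_left fun he => hqk ((inf_eq_left.1 he) hqG))
  have hge : k - 1 ≤ finrank ℂ ↥(G ⊓ degreeLT ℂ k) := by
    rcases Nat.eq_or_lt_of_le hk with h1 | h1
    · omega
    · have := hG.le_finrank_inf (k - 1) (by omega) le_rfl
      rwa [Nat.sub_add_cancel hk] at this
  obtain ⟨h, hh, h0, hW⟩ := exists_concomitant_eq_zero _ inf_le_right hlt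
  have hne : ∀ r, r ∉ degreeLT ℂ k → concomitant k h r ≠ 0 := fun r hr hz =>
    hr (mem_degreeLT_of_concomitant_eq_zero hh h0 hz)
  have hmap : G.map (concomitant k h) = Submodule.span ℂ {concomitant k h q} := by
    symm
    apply Submodule.eq_of_le_of_finrank_le
    · exact (Submodule.span_singleton_le_iff_mem _ _).2 ⟨q, hqG, rfl⟩
    · have h1 := finrank_map_add_finrank_inf_ker (concomitant k h) G
      have h2 : G ⊓ degreeLT ℂ k ≤ G ⊓ LinearMap.ker (concomitant k h) :=
        le_inf inf_le_left fun r hr => hW r hr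
      have h3 := Submodule.finrank_mono h2
      rw [hG.finrank_eq] at h1
      rw [finrank_span_singleton (hne q hqk)]
      omega
  have hroot : ∀ i, X - C (t i) ∣ concomitant k h q := by
    intro i
    obtain ⟨r, hrG, hr0, hrd⟩ := hG.exists_pow_dvd i
    have hmem : concomitant k h r ∈ G.map (concomitant k h) := ⟨r, hrG, rfl⟩
    rw [hmap] at hmem
    obtain ⟨c, hc⟩ := Submodule.mem_span_singleton.1 hmem
    have hc0 : c ≠ 0 := by
      rintro rfl
      exact hne r (hnot i r hr0 hrd) (by rw [← hc, zero_smul])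
    have hev := eval_concomitant_of_pow_dvd hrd h
    rw [← hc, eval_smul, smul_eq_zero] at hev
    exact dvd_iff_isRoot.2 (hev.resolve_left hc0)
  have hkh : h.natDegree < k := (natDegree_lt_iff_degree_lt h0).2 (mem_degreeLT.1 hh)
  have hqN : q.natDegree < N + 1 :=
    (natDegree_lt_iff_degree_lt hq0).2 (mem_degreeLT.1 (hG.le_degreeLT hqG))
  obtain ⟨p, hp⟩ : f ∣ concomitant k h q :=
    Fintype.prod_dvd_of_coprime (pairwise_coprime_X_sub_C ht) hroot
  have hp0 : p ≠ 0 := by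
    rintro rfl
    exact hne q hqk (by rw [hp, mul_zero])
  have hpdeg : p.natDegree = 0 := by
    have h1 := natDegree_concomitant_le k N (h := h) (q := q) (by omega) (by omega)
    rw [hp, natDegree_mul hf0 hp0] at h1
    omega
  obtain ⟨c, rfl⟩ : ∃ c, p = C c := ⟨_, eq_C_of_natDegree_eq_zero hpdeg⟩
  have hc0 : c ≠ 0 := by
    rintro rfl
    exact hp0 C_0
  have hd : h * derivative^[k] q = derivative f * C c := by
    rw [← derivative_concomitant_of_mem hh, hp, derivative_mul, derivative_C, mul_zero, add_zero]
  have hr0 : derivative^[k] q ≠ 0 := fun hz => hqk (mem_degreeLT_of_iterate_derivative_eq_zero hz)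
  have hdeg : h.natDegree + (derivative^[k] q).natDegree = N - 1 := by
    rw [← natDegree_mul h0 hr0, hd, natDegree_mul_C hc0, natDegree_derivative, hfN]
  have hrN := natDegree_iterate_derivative q k
  set r := derivative^[k] q
  have hl : r.leadingCoeff ≠ 0 := leadingCoeff_ne_zero.2 hr0
  have ha : r.leadingCoeff / c ≠ 0 := div_ne_zero hl hc0
  set h' := (r.leadingCoeff / c) • h with hh'
  have hh'0 : h' ≠ 0 := smul_ne_zero ha h0
  have hh'k : h' ∈ degreeLT ℂ k := Submodule.smul_mem _ _ hh
  have hgh : (r * C r.leadingCoeff⁻¹) * h' = derivative f := by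
    have : (C (r.leadingCoeff⁻¹ * (r.leadingCoeff / c))) * C c = (1 : ℂ[X]) := by
      rw [← C_mul, ← C_1]
      congr 1
      field_simp
    rw [hh', smul_eq_C_mul]
    calc _ = C (r.leadingCoeff⁻¹ * (r.leadingCoeff / c)) * (h * r) := by rw [C_mul]; ring
      _ = _ := by rw [hd, mul_comm (derivative f), ← mul_assoc, this, one_mul]
  have hmon : (r * C r.leadingCoeff⁻¹).Monic := monic_mul_leadingCoeff_inv hr0
  have hgdeg : (r * C r.leadingCoeff⁻¹).degree = (N - k : ℕ) := by
    rw [degree_mul_leadingCoeff_inv r hr0, degree_eq_natDegree hr0]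
    congr 1
    omega
  refine ⟨r * C r.leadingCoeff⁻¹, h', hmon, hgdeg, ?_, hgh, ?_⟩
  · rw [degree_eq_natDegree hh'0, hh', natDegree_smul _ ha]
    congr 1
    omega
  · symm
    have : FiniteDimensional ℂ (concomitantSpace k N f h') :=
      Submodule.finiteDimensional_of_le inf_le_left
    apply Submodule.eq_of_le_of_finrank_le
    · refine le_inf hG.le_degreeLT fun s hs => ?_
      have hmem : concomitant k h s ∈ G.map (concomitant k h) := ⟨s, hs, rfl⟩
      rw [hmap] at hmem
      obtain ⟨b, hb⟩ := Submodule.mem_span_singleton.1 hmem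
      rw [Submodule.mem_comap, hh', map_smul, LinearMap.smul_apply, ← hb, hp, mul_comm,
        ← smul_eq_C_mul]
      exact Submodule.smul_mem _ _ (Submodule.smul_mem _ _
        (Submodule.smul_mem _ _ (Submodule.mem_span_singleton_self f)))
    · rw [hG.finrank_eq, finrank_concomitantSpace hkN (by omega) (mem_degreeLT.2 ?_) hh'k hh'0 hgh]
      rw [hgdeg]
      exact_mod_cast (show N - k < N + 1 - k by omega)

/-- The isomorphism of `ℂ^(N+1)` with the polynomials of degree at most `N` sending the flag at
infinity to the degree filtration and `F_i(s)` to the multiples of `(X - s)^(N+1-i)`. -/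
noncomputable def toPoly (N : ℕ) : (Fin (N + 1) → ℂ) →ₗ[ℂ] ℂ[X] :=
  ∑ i : Fin (N + 1), (monomial (N - i)).comp
    (((-1) ^ (i : ℕ) * ((N - i).factorial : ℂ)⁻¹) • LinearMap.proj i)

lemma coeff_toPoly {N : ℕ} (v : Fin (N + 1) → ℂ) (i : Fin (N + 1)) :
    (toPoly N v).coeff (N - i) = (-1) ^ (i : ℕ) * ((N - i).factorial : ℂ)⁻¹ * v i := by
  simp only [toPoly, LinearMap.sum_apply, LinearMap.comp_apply, LinearMap.smul_apply,
    LinearMap.proj_apply, finsetSum_coeff, coeff_monomial, smul_eq_mul]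
  rw [Finset.sum_eq_single i]
  · simp
  · intro j _ hj
    rw [if_neg]
    intro h
    exact hj (Fin.ext (by omega))
  · simp

lemma toPoly_mem_degreeLT {N : ℕ} (v : Fin (N + 1) → ℂ) : toPoly N v ∈ degreeLT ℂ (N + 1) := by
  simp only [toPoly, LinearMap.sum_apply, LinearMap.comp_apply]
  refine Submodule.sum_mem _ fun i _ => mem_degreeLT.2 ((degree_monomial_le _ _).trans_lt ?_)
  exact_mod_cast (show N - (i : ℕ) < N + 1 by omega)

lemma eq_of_coeff_sub_eq {N : ℕ} {p q : ℂ[X]} (hp : p ∈ degreeLT ℂ (N + 1))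
    (hq : q ∈ degreeLT ℂ (N + 1)) (h : ∀ i : Fin (N + 1), p.coeff (N - i) = q.coeff (N - i)) :
    p = q := by
  ext m
  rcases Nat.lt_or_ge m (N + 1) with hm | hm
  · simpa [Nat.sub_sub_self (Nat.lt_succ_iff.1 hm)] using h ⟨N - m, by omega⟩
  · rw [(degree_lt_iff_coeff_zero _ _).1 (mem_degreeLT.1 hp) m hm,
      (degree_lt_iff_coeff_zero _ _).1 (mem_degreeLT.1 hq) m hm]

lemma toPoly_injective (N : ℕ) : Function.Injective (toPoly N) := by
  intro v w h
  ext i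
  have := congrArg (fun p => coeff p (N - i)) h
  simp only [coeff_toPoly] at this
  exact mul_left_cancel₀ (mul_ne_zero (by simp)
    (inv_ne_zero (Nat.cast_ne_zero.2 (Nat.factorial_ne_zero _)))) this

lemma range_toPoly (N : ℕ) : LinearMap.range (toPoly N) = degreeLT ℂ (N + 1) := by
  apply Submodule.eq_of_le_of_finrank_eq
  · rintro _ ⟨v, rfl⟩
    exact toPoly_mem_degreeLT v
  · rw [LinearMap.finrank_range_of_inj (toPoly_injective N), finrank_degreeLT]
    simp

lemma toPoly_mem_degreeLT_iff {N m : ℕ} (v : Fin (N + 1) → ℂ) :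
    toPoly N v ∈ degreeLT ℂ m ↔ v ∈ infFlag (N + 1) m := by
  rw [mem_degreeLT, degree_lt_iff_coeff_zero, infFlag, Submodule.mem_pi]
  have hcoeff (i : Fin (N + 1)) : (toPoly N v).coeff (N - i) = 0 ↔ v i = 0 := by
    rw [coeff_toPoly]
    simp [Nat.factorial_ne_zero]
  constructor
  · intro h j _
    split_ifs with hj
    · exact (Submodule.mem_bot ℂ).2 ((hcoeff j).1 (h _ (by omega)))
    · trivial
  · intro h a ha
    rcases Nat.lt_or_ge a (N + 1) with haN | haN
    · have h1 := h ⟨N - a, by omega⟩ (Set.mem_univ _)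
      rw [if_pos (show N - a + m < N + 1 by omega), Submodule.mem_bot, ← hcoeff] at h1
      simpa [Nat.sub_sub_self (Nat.lt_succ_iff.1 haN)] using h1
    · exact (degree_lt_iff_coeff_zero _ _).1 (mem_degreeLT.1 (toPoly_mem_degreeLT v)) a haN

lemma toPoly_gammaVec {N m : ℕ} (hm : m ≤ N) (s : ℂ) :
    toPoly N (gammaVec (N + 1) m s) =
      ((-1) ^ m * ((N - m).factorial : ℂ)⁻¹) • (X - C s) ^ (N - m) := by
  refine eq_of_coeff_sub_eq (toPoly_mem_degreeLT _) ?_ fun i => ?_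
  · refine Submodule.smul_mem _ _ (mem_degreeLT.2 ?_)
    rw [degree_pow, degree_X_sub_C, nsmul_one]
    exact_mod_cast (show N - m < N + 1 by omega)
  · rw [coeff_toPoly, coeff_smul, gammaVec, iterate_derivative_C_mul,
      iterate_derivative_X_pow_eq_natCast_mul, sub_eq_add_neg, ← C_neg, coeff_X_add_C_pow]
    simp only [eval_mul, eval_C, eval_natCast, eval_pow, eval_X, smul_eq_mul]
    rcases Nat.lt_or_ge i m with him | him
    · rw [Nat.descFactorial_eq_zero_iff_lt.2 him, Nat.choose_eq_zero_of_lt (by omega)]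
      simp
    · obtain ⟨d, hd⟩ := Nat.exists_eq_add_of_le him
      have hiN := i.2
      obtain ⟨b, rfl⟩ : ∃ b, N = m + d + b := ⟨N - i, by omega⟩
      rw [hd, show m + d + b - (m + d) = b by omega, show m + d + b - m = d + b by omega,
        show m + d - m = d by omega, show d + b - b = d by omega, neg_pow s d]
      have h1 : ((m + d).descFactorial m : ℂ) = (m + d).factorial / d.factorial := by
        rw [eq_div_iff (Nat.cast_ne_zero.2 d.factorial_ne_zero), mul_comm]
        have := Nat.factorial_mul_descFactorial (Nat.le_add_right m d)
        rw [Nat.add_sub_cancel_left] at this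
        exact_mod_cast this
      have h2 : ((d + b).choose b : ℂ) = (d + b).factorial / (d.factorial * b.factorial) := by
        rw [← Nat.choose_symm_add, Nat.cast_add_choose]
      have f1 : ((m + d).factorial : ℂ) ≠ 0 := Nat.cast_ne_zero.2 (Nat.factorial_ne_zero _)
      have f2 : (d.factorial : ℂ) ≠ 0 := Nat.cast_ne_zero.2 (Nat.factorial_ne_zero _)
      have f3 : (b.factorial : ℂ) ≠ 0 := Nat.cast_ne_zero.2 (Nat.factorial_ne_zero _)
      have f4 : ((d + b).factorial : ℂ) ≠ 0 := Nat.cast_ne_zero.2 (Nat.factorial_ne_zero _)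
      rw [h1, h2]
      field_simp
      ring

lemma pow_dvd_toPoly_iff {k N : ℕ} (hkN : k ≤ N) (s : ℂ) (v : Fin (N + 1) → ℂ) :
    (X - C s) ^ k ∣ toPoly N v ↔ v ∈ oscFlag (N + 1) (N + 1 - k) s := by
  constructor
  · rintro ⟨r, hr⟩
    have hpow : ∀ j, j + k ≤ N → (X - C s) ^ (j + k) ∈
        (oscFlag (N + 1) (N + 1 - k) s).map (toPoly N) := by
      intro j hj
      have h1 := toPoly_gammaVec (Nat.sub_le N (j + k)) s
      rw [Nat.sub_sub_self hj] at h1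
      have hc : ((-1 : ℂ) ^ (N - (j + k)) * ((j + k).factorial : ℂ)⁻¹) ≠ 0 := by
        simp [Nat.factorial_ne_zero]
      rw [← inv_smul_eq_iff₀ hc] at h1
      rw [← h1]
      refine Submodule.smul_mem _ _ (Submodule.mem_map_of_mem (Submodule.subset_span ?_))
      exact ⟨⟨N - (j + k), by omega⟩, rfl⟩
    suffices toPoly N v ∈ (oscFlag (N + 1) (N + 1 - k) s).map (toPoly N) by
      obtain ⟨w, hw, hwv⟩ := this
      rwa [← toPoly_injective N hwv]
    rw [hr]
    rcases eq_or_ne r 0 with rfl | hr0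
    · simp
    have hdeg : r.natDegree + k ≤ N := by
      have h1 := mem_degreeLT.1 (toPoly_mem_degreeLT v)
      have hne : (X - C s) ^ k ≠ 0 := pow_ne_zero _ (X_sub_C_ne_zero s)
      rw [hr, ← natDegree_lt_iff_degree_lt (mul_ne_zero hne hr0), natDegree_mul hne hr0,
        natDegree_pow, natDegree_X_sub_C] at h1
      omega
    rw [← sum_taylor_eq r s, sum_over_range _ (by simp), natDegree_taylor, Finset.mul_sum]
    refine Submodule.sum_mem _ fun j hj => ?_
    have := Finset.mem_range.1 hj
    rw [mul_left_comm, ← pow_add, ← smul_eq_C_mul, add_comm k j]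
    exact Submodule.smul_mem _ _ (hpow j (by omega))
  · intro hv
    induction hv using Submodule.span_induction with
    | mem x hx =>
      obtain ⟨m, rfl⟩ := hx
      have hm := m.2
      simp only [toPoly_gammaVec (show (m : ℕ) ≤ N by omega)]
      exact dvd_smul_of_dvd _ (pow_dvd_pow _ (by omega))
    | zero => simp
    | add x y _ _ hx hy => rw [map_add]; exact dvd_add hx hy
    | smul a x _ hx => rw [map_smul]; exact dvd_smul_of_dvd _ hx

lemma isOsculatingSolution_map_iff {k N : ℕ} (hkN : k ≤ N) (t : Fin N → ℂ)
    (H : Submodule ℂ (Fin (N + 1) → ℂ)) :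
    IsOsculatingSolution k N t (H.map (toPoly N)) ↔
      finrank ℂ H = k ∧
      (∀ i : ℕ, 1 ≤ i → i ≤ k - 1 → i ≤ finrank ℂ ↥(H ⊓ infFlag (N + 1) (i + 1))) ∧
      (∀ i : Fin N, H ⊓ oscFlag (N + 1) (N + 1 - k) (t i) ≠ ⊥) := by
  have hrank (K : Submodule ℂ (Fin (N + 1) → ℂ)) : finrank ℂ (K.map (toPoly N)) = finrank ℂ K :=
    (Submodule.equivMapOfInjective _ (toPoly_injective N) K).finrank_eq.symm
  have hinf (m : ℕ) : H.map (toPoly N) ⊓ degreeLT ℂ m = (H ⊓ infFlag (N + 1) m).map (toPoly N) := by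
    ext q
    constructor
    · rintro ⟨⟨v, hv, rfl⟩, h2⟩
      exact ⟨v, ⟨hv, (toPoly_mem_degreeLT_iff v).1 h2⟩, rfl⟩
    · rintro ⟨v, ⟨hv, h2⟩, rfl⟩
      exact ⟨⟨v, hv, rfl⟩, (toPoly_mem_degreeLT_iff v).2 h2⟩
  have hosc (s : ℂ) : (∃ q ∈ H.map (toPoly N), q ≠ 0 ∧ (X - C s) ^ k ∣ q) ↔
      H ⊓ oscFlag (N + 1) (N + 1 - k) s ≠ ⊥ := by
    rw [Submodule.ne_bot_iff]
    constructor
    · rintro ⟨_, ⟨v, hv, rfl⟩, h0, hd⟩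
      exact ⟨v, ⟨hv, (pow_dvd_toPoly_iff hkN s v).1 hd⟩, fun h => h0 (by rw [h, map_zero])⟩
    · rintro ⟨v, ⟨hv, hd⟩, h0⟩
      exact ⟨_, ⟨v, hv, rfl⟩, (map_ne_zero_iff _ (toPoly_injective N)).2 h0,
        (pow_dvd_toPoly_iff hkN s v).2 hd⟩
  constructor
  · intro h
    refine ⟨(hrank H).symm.trans h.finrank_eq, fun i h1 h2 => ?_,
      fun i => (hosc _).1 (h.exists_pow_dvd i)⟩
    rw [← hrank, ← hinf]
    exact h.le_finrank_inf i h1 h2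
  · rintro ⟨h1, h2, h3⟩
    refine ⟨?_, (hrank H).trans h1, fun i hi hik => ?_, fun i => (hosc _).2 (h3 i)⟩
    · rw [← range_toPoly]
      exact LinearMap.map_le_range
    · rw [hinf, hrank]
      exact h2 i hi hik

/-- **Solutions of the osculating instance of `(□_{k,n}, □^{n−1})` are factorizations.**
For distinct complex numbers `t₁, …, t_{n−1}` and `f(t) = ∏ (t − t_i)`, the set of
`k`-dimensional subspaces `H ⊆ ℂⁿ` with `dim(H ∩ F_{i+1}(∞)) ≥ i` for `1 ≤ i ≤ k−1`
and `H ∩ F_{n−k}(t_i) ≠ 0` for all `i` is in bijection with the pairs `(g, h)` with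
`g` monic of degree `n−k−1`, `deg h = k−1` and `g·h = f′`. -/
theorem factorization_bijection (k n : ℕ) (hk : 1 ≤ k) (hkn : k ≤ n - 1)
    (t : Fin (n - 1) → ℂ) (ht : Function.Injective t) :
    Nonempty (
      {H : Submodule ℂ (Fin n → ℂ) //
          Module.finrank ℂ H = k ∧
          (∀ i : ℕ, 1 ≤ i → i ≤ k - 1 →
            i ≤ Module.finrank ℂ ↥(H ⊓ infFlag n (i + 1))) ∧
          (∀ i : Fin (n - 1), H ⊓ oscFlag n (n - k) (t i) ≠ ⊥)} ≃
      {gh : Polynomial ℂ × Polynomial ℂ //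
          gh.1.Monic ∧ gh.1.degree = (n - k - 1 : ℕ) ∧ gh.2.degree = (k - 1 : ℕ) ∧
          gh.1 * gh.2 =
            Polynomial.derivative (∏ i, (Polynomial.X - Polynomial.C (t i)))}) := by
  obtain ⟨N, rfl⟩ : ∃ N, n = N + 1 := ⟨n - 1, by omega⟩
  change k ≤ N at hkn
  change Fin N → ℂ at t
  have hmem {g h : ℂ[X]} (hg : g.degree = (N + 1 - k - 1 : ℕ)) (hh : h.degree = (k - 1 : ℕ)) :
      g ∈ degreeLT ℂ (N + 1 - k) ∧ h ∈ degreeLT ℂ k ∧ h ≠ 0 := by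
    refine ⟨mem_degreeLT.2 ?_, mem_degreeLT.2 ?_, ?_⟩
    · rw [hg]
      exact_mod_cast (show N + 1 - k - 1 < N + 1 - k by omega)
    · rw [hh]
      exact_mod_cast (show k - 1 < k by omega)
    · rintro rfl
      simp at hh
  let f : ℂ[X] := ∏ i, (X - C (t i))
  have hmap {h : ℂ[X]} : ((concomitantSpace k N f h).comap (toPoly N)).map (toPoly N) =
      concomitantSpace k N f h := by
    rw [Submodule.map_comap_eq, range_toPoly]
    exact inf_eq_right.2 inf_le_left
  have hsol {g h : ℂ[X]} (hg : g.degree = (N + 1 - k - 1 : ℕ)) (hh : h.degree = (k - 1 : ℕ))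
      (hgh : g * h = derivative f) :
      IsOsculatingSolution k N t
        (((concomitantSpace k N f h).comap (toPoly N)).map (toPoly N)) := by
    obtain ⟨hg', hh', h0⟩ := hmem hg hh
    rw [hmap]
    exact isOsculatingSolution_concomitantSpace hk hkn hg' hh' h0 hgh
  refine ⟨(Equiv.ofBijective (fun gh => ⟨(concomitantSpace k N f gh.1.2).comap (toPoly N),
    (isOsculatingSolution_map_iff hkn t _).1 (hsol gh.2.2.1 gh.2.2.2.1 gh.2.2.2.2)⟩)
    ⟨?_, ?_⟩).symm⟩
  · rintro ⟨⟨g₁, h₁⟩, hm₁, hg₁, hh₁, hgh₁⟩ ⟨⟨g₂, h₂⟩, hm₂, hg₂, hh₂, hgh₂⟩ heq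
    obtain ⟨hg₁', hh₁', h0₁⟩ := hmem hg₁ hh₁
    obtain ⟨-, hh₂', h0₂⟩ := hmem hg₂ hh₂
    have heq' := congrArg (fun H => H.1.map (toPoly N)) heq
    simp only [hmap] at heq'
    obtain ⟨rfl, rfl⟩ := eq_of_concomitantSpace_eq hkn hm₁ hg₁' hh₁' h0₁ hgh₁ hm₂ hh₂' h0₂ hgh₂ heq'
    rfl
  · rintro ⟨H, hH⟩
    obtain ⟨g, h, hm, hg, hh, hgh, hG⟩ := exists_factorization_of_isOsculatingSolution ht hk hkn
      ((isOsculatingSolution_map_iff hkn t H).2 hH)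
    refine ⟨⟨(g, h), hm, ?_, hh, hgh⟩, Subtype.ext ?_⟩
    · rw [hg]
      congr 1
      omega
    · change (concomitantSpace k N f h).comap (toPoly N) = H
      rw [hG, Submodule.comap_map_eq_of_injective (toPoly_injective N)]
end

section
/- Fix 1 ≤ k < n. Let f₀ ∈ ℂ, let g₀,…,g_{n−k−2} ∈ ℂ with g_{n−k−1} := 1, and let h₀,…,h_{k−2} ∈ ℂ∖{0} with h_{k−1} := 1. Let A be the k×n matrix whose first row is (c₁ g_{n−k−1}, c₂ g_{n−k−2}, …, c_{n−k} g₀, f₀/h₀, 0, …, 0), where c_m := (−1)^{n−k−m+1}(n−k−m)! for 1 ≤ m ≤ n−k, and whose i-th row, for 2 ≤ i ≤ k, has entry −(i−1) in column n−k+i−1, entry h_{i−2}/h_{i−1} in column n−k+i, and 0 in all other columns. Let B(t) be the (n−k)×n matrix whose m-th row is γ^{(m−1)}(t) for m = 1,…,n−k. Then, as polynomials in t, the determinant of the n×n matrix with A stacked on top of B(t) equals (−1)^{k(n−k)} ( Σ_{i=0}^{n−k−1} Σ_{j=0}^{k−1} (g_i h_j / (i+j+1)) t^{i+j+1} + f₀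 ). [Lemma 4 (the determinant computation underlying the factorization theorem).] -/
/-- The value `x ^ (j - m) / (j - m)!` of the `m`-th derivative of `x ^ j / j!`. -/
noncomputable def taylorEntry (x : ℂ) (m j : ℕ) : ℂ :=
  if m ≤ j then x ^ (j - m) / ((j - m).factorial : ℂ) else 0

theorem gammaVec_eq_taylorEntry (n m : ℕ) (t : ℂ) (j : Fin n) :
    gammaVec n m t j = taylorEntry t m j := by
  unfold gammaVec taylorEntry
  rw [Polynomial.iterate_derivative_C_mul, Polynomial.iterate_derivative_X_pow_eq_C_mul]
  simp only [Polynomial.eval_mul, Polynomial.eval_C, Polynomial.eval_pow, Polynomial.eval_X]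
  split_ifs with hmj
  · have hfac : (((j : ℕ) - m).factorial : ℂ) * (((j : ℕ).descFactorial m : ℕ) : ℂ) =
        ((j : ℕ).factorial : ℂ) := by
      exact_mod_cast Nat.factorial_mul_descFactorial hmj
    have hj : ((j : ℕ).factorial : ℂ) ≠ 0 := by exact_mod_cast Nat.factorial_ne_zero _
    have hjm : (((j : ℕ) - m).factorial : ℂ) ≠ 0 := by exact_mod_cast Nat.factorial_ne_zero _
    field_simp
    rw [← hfac]
    ring
  · rw [Nat.descFactorial_of_lt (not_le.mp hmj)]
    simp

theorem taylorEntry_neg_mul_taylorEntry (t : ℂ) (a p N : ℕ) :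
    taylorEntry (-t) a (a + p) * taylorEntry t (a + p) (a + N) =
      (-1) ^ p * (N.choose p : ℂ) * (t ^ N / (N.factorial : ℂ)) := by
  unfold taylorEntry
  by_cases hp : p ≤ N
  · obtain ⟨q, rfl⟩ := Nat.exists_eq_add_of_le hp
    have h₁ : a + (p + q) - (a + p) = q := by omega
    have hfac : (((p + q).choose p : ℕ) : ℂ) * (p.factorial : ℂ) * (q.factorial : ℂ) =
        ((p + q).factorial : ℂ) := by
      rw [Nat.choose_symm_add]
      exact_mod_cast Nat.add_choose_mul_factorial_mul_factorial p q
    have hp0 : (p.factorial : ℂ) ≠ 0 := by exact_mod_cast Nat.factorial_ne_zero _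
    have hq0 : (q.factorial : ℂ) ≠ 0 := by exact_mod_cast Nat.factorial_ne_zero _
    have hpq0 : ((p + q).factorial : ℂ) ≠ 0 := by exact_mod_cast Nat.factorial_ne_zero _
    rw [if_pos (by omega), if_pos (by omega), h₁, Nat.add_sub_cancel_left, neg_pow]
    field_simp
    rw [← hfac]
    ring
  · rw [Nat.choose_eq_zero_of_lt (not_le.mp hp), if_neg (show ¬ a + p ≤ a + N by omega)]
    simp

theorem sum_range_taylorEntry_neg_mul (t : ℂ) (a i j : ℕ) :
    ∑ m ∈ Finset.range (a + (i + 1)), taylorEntry (-t) a m * taylorEntry t m j =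
      if j < a then 0 else if j = a then 1 else
        (-1) ^ i * ((j - a - 1).choose i : ℂ) * (t ^ (j - a) / ((j - a).factorial : ℂ)) := by
  rw [Finset.sum_range_add, Finset.sum_eq_zero (s := Finset.range a), zero_add]
  · split_ifs with hja hja'
    · refine Finset.sum_eq_zero fun p _ => ?_
      rw [taylorEntry.eq_def t, if_neg (by omega), mul_zero]
    · subst hja'
      have := fun p => taylorEntry_neg_mul_taylorEntry t j p 0
      simp only [add_zero] at this
      rw [Finset.sum_congr rfl fun p _ => this p, Finset.sum_range_succ']
      simp
    · obtain ⟨N, rfl⟩ : ∃ N, j = a + (N + 1) := ⟨j - a - 1, by omega⟩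
      have halt : ∑ p ∈ Finset.range (i + 1), (-1 : ℂ) ^ p * ((N + 1).choose p : ℂ) =
          (-1) ^ i * (N.choose i : ℂ) := by
        exact_mod_cast congrArg (Int.cast : ℤ → ℂ)
          (Int.alternating_sum_range_choose_eq_choose (n := N) (m := i))
      rw [Finset.sum_congr rfl fun p _ => taylorEntry_neg_mul_taylorEntry t a p (N + 1),
        ← Finset.sum_mul, halt, Nat.add_sub_cancel_left, Nat.add_sub_cancel]
  · intro m hm
    rw [taylorEntry, if_neg (by simpa using hm), zero_mul]

/-- The square matrix of the first `d` columns of the osculating flag. -/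
noncomputable def taylorMatrix (d : ℕ) (x : ℂ) : Matrix (Fin d) (Fin d) ℂ :=
  Matrix.of fun m j => taylorEntry x m j

theorem taylorMatrix_neg_mul_self (d : ℕ) (t : ℂ) :
    taylorMatrix d (-t) * taylorMatrix d t = 1 := by
  ext a j
  obtain ⟨i, hi⟩ : ∃ i, d = (a : ℕ) + (i + 1) := ⟨d - a - 1, by omega⟩
  have hsum := sum_range_taylorEntry_neg_mul t a i j
  rw [← hi, ← Fin.sum_univ_eq_sum_range (fun m => taylorEntry (-t) a m * taylorEntry t m j)] at hsum
  simp only [Matrix.mul_apply, taylorMatrix, Matrix.of_apply, hsum, Matrix.one_apply, Fin.ext_iff]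
  split_ifs with h₁ h₂ h₃ h₄ h₅
  · omega
  · rfl
  · rfl
  · omega
  · omega
  · rw [Nat.choose_eq_zero_of_lt (by omega)]
    simp

theorem det_taylorMatrix (d : ℕ) (t : ℂ) : (taylorMatrix d t).det = 1 := by
  rw [Matrix.det_of_isUpperTriangular]
  · simp [taylorMatrix, taylorEntry]
  · intro i j hij
    have hij' : j < i := hij
    simp [taylorMatrix, taylorEntry, hij']

/-- The determinant of a lower bidiagonal matrix whose first row is replaced by `x`. -/
theorem det_bidiagonal_with_first_row (k : ℕ) (x h : ℕ → ℂ) (hnz : ∀ j ≤ k, h j ≠ 0) :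
    (Matrix.of fun r s : Fin (k + 1) => if (r : ℕ) = 0 then x s else
      if (s : ℕ) + 1 = r then -((r : ℕ) : ℂ) else
        if (s : ℕ) = r then h ((r : ℕ) - 1) / h r else 0).det =
      (∑ s ∈ Finset.range (k + 1), x s * (s.factorial : ℂ) * h s) / h k := by
  set M : Matrix (Fin (k + 1)) (Fin (k + 1)) ℂ :=
    Matrix.of fun r s : Fin (k + 1) => if (r : ℕ) = 0 then x s else
      if (s : ℕ) + 1 = r then -((r : ℕ) : ℂ) else
        if (s : ℕ) = r then h ((r : ℕ) - 1) / h r else 0 with hM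
  have hcol := Matrix.det_updateCol_sum M 0 fun s => ((s : ℕ).factorial : ℂ) * h s
  have hker : ∀ r : Fin k, ∑ s : Fin (k + 1),
      (((s : ℕ).factorial : ℂ) * h s) • M r.succ s = 0 := by
    intro r
    rw [Finset.sum_eq_add (a := r.castSucc) (b := r.succ)]
    · have hr : h ((r : ℕ) + 1) ≠ 0 := hnz _ (by omega)
      simp [hM, Nat.factorial_succ]
      field_simp
      ring
    · simp [Fin.ext_iff]
    · intro s _ hs
      simp only [Fin.ext_iff, ne_eq, Fin.val_castSucc, Fin.val_succ] at hs
      simp [hM, hs.1, hs.2]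
    · simp
    · simp
  have hminor : (M.submatrix Fin.succ Fin.succ).det = h 0 / h k := by
    rw [Matrix.det_of_isLowerTriangular]
    · have hprod : ∀ m ≤ k, ∏ r ∈ Finset.range m, h r / h (r + 1) = h 0 / h m := by
        intro m
        induction m with
        | zero => intro _; simp [hnz 0 (Nat.zero_le _)]
        | succ m ih =>
          intro hm
          rw [Finset.prod_range_succ, ih (by omega)]
          have := hnz m (by omega)
          field_simp
      rw [← hprod k le_rfl, ← Fin.prod_univ_eq_prod_range (fun r => h r / h (r + 1))]
      exact Finset.prod_congr rfl fun r _ => by simp [hM]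
    · intro r s hrs
      have hrs' : (r : ℕ) < s := hrs
      have h₁ : ¬ (s : ℕ) + 1 = r := by omega
      have h₂ : ¬ (s : ℕ) = r := by omega
      simp [hM, h₁, h₂]
  rw [Matrix.det_succ_column_zero, Fin.sum_univ_succ] at hcol
  simp only [Matrix.updateCol_self, hker, mul_zero, zero_mul, Finset.sum_const_zero,
    add_zero] at hcol
  have hsub : (M.updateCol 0 fun r => ∑ s : Fin (k + 1),
      (((s : ℕ).factorial : ℂ) * h s) • M r s).submatrix (Fin.succAbove 0) Fin.succ =
      M.submatrix Fin.succ Fin.succ := by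
    ext r s
    simp
  rw [hsub, hminor] at hcol
  have h0 : h 0 ≠ 0 := hnz 0 (Nat.zero_le _)
  have hfirst : ∑ s : Fin (k + 1), (((s : ℕ).factorial : ℂ) * h s) • M 0 s =
      ∑ s ∈ Finset.range (k + 1), x s * (s.factorial : ℂ) * h s := by
    rw [← Fin.sum_univ_eq_sum_range (fun s => x s * (s.factorial : ℂ) * h s)]
    exact Finset.sum_congr rfl fun s _ => by simp [hM]; ring
  rw [hfirst] at hcol
  simp only [Fin.val_zero, pow_zero, one_mul, Nat.factorial_zero, Nat.cast_one, smul_eq_mul] at hcol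
  apply mul_left_cancel₀ h0
  rw [← hcol]
  ring

theorem val_finRotate_pow_apply (n d : ℕ) (i : Fin n) :
    (((finRotate n) ^ d) i : ℕ) = (i + d) % n := by
  cases n with
  | zero => exact i.elim0
  | succ n =>
    induction d with
    | zero => simp [Nat.mod_eq_of_lt i.isLt]
    | succ d ih =>
      rw [pow_succ', Equiv.Perm.mul_apply, finRotate_apply, Fin.val_add, ih, Fin.val_one',
        Nat.add_mod_mod, Nat.mod_add_mod, add_assoc]

/-- Moving the first `d` columns past the last `k` columns multiplies the determinant by
`(-1) ^ (k * d)`. -/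
theorem det_eq_neg_one_pow_mul_det_fromBlocks {R : Type*} [CommRing R] (k d : ℕ)
    (M : Matrix (Fin k ⊕ Fin d) (Fin (k + d)) R) :
    (M.submatrix finSumFinEquiv.symm id).det = (-1) ^ (k * d) *
      (Matrix.fromBlocks
        (Matrix.of fun (r : Fin k) (s : Fin k) => M (Sum.inl r) ⟨d + s, by omega⟩)
        (Matrix.of fun (r : Fin k) (a : Fin d) => M (Sum.inl r) ⟨a, by omega⟩)
        (Matrix.of fun (m : Fin d) (s : Fin k) => M (Sum.inr m) ⟨d + s, by omega⟩)
        (Matrix.of fun (m : Fin d) (a : Fin d) => M (Sum.inr m) ⟨a, by omega⟩)).det := by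
  set N := M.submatrix finSumFinEquiv.symm id
  have hperm := Matrix.det_permute' ((finRotate (k + d)) ^ d) N
  have hsign : ((Equiv.Perm.sign ((finRotate (k + d)) ^ d) : ℤˣ) : ℤ) = (-1) ^ (k * d) := by
    rw [map_pow, sign_finRotate, ← pow_mul]
    push_cast
    cases d with
    | zero => simp
    | succ d =>
      rw [show (k + (d + 1) - 1) * (d + 1) = k * (d + 1) + d * (d + 1) by
        rw [← add_assoc, Nat.add_sub_cancel, add_mul], pow_add,
        (Nat.even_mul_succ_self d).neg_one_pow, mul_one]
  have hblocks : (N.submatrix id ((finRotate (k + d)) ^ d)).submatrix finSumFinEquiv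
      finSumFinEquiv = Matrix.fromBlocks
        (Matrix.of fun (r : Fin k) (s : Fin k) => M (Sum.inl r) ⟨d + s, by omega⟩)
        (Matrix.of fun (r : Fin k) (a : Fin d) => M (Sum.inl r) ⟨a, by omega⟩)
        (Matrix.of fun (m : Fin d) (s : Fin k) => M (Sum.inr m) ⟨d + s, by omega⟩)
        (Matrix.of fun (m : Fin d) (a : Fin d) => M (Sum.inr m) ⟨a, by omega⟩) := by
    have hl : ∀ s : Fin k, ((finRotate (k + d)) ^ d) (Fin.castAdd d s) = ⟨d + s, by omega⟩ := by
      intro s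
      ext
      rw [val_finRotate_pow_apply, Fin.val_castAdd, Nat.mod_eq_of_lt (by omega), add_comm]
    have hr : ∀ a : Fin d, ((finRotate (k + d)) ^ d) (Fin.natAdd k a) = ⟨a, by omega⟩ := by
      intro a
      ext
      rw [val_finRotate_pow_apply, Fin.val_natAdd, show k + (a : ℕ) + d = a + (k + d) by omega,
        Nat.add_mod_right, Nat.mod_eq_of_lt (by omega)]
    ext (r | m) (s | a) <;> simp [N, hl, hr]
  rw [← hblocks, Matrix.det_submatrix_equiv_self, hperm, hsign]
  push_cast
  rw [← mul_assoc, ← pow_add, Even.neg_one_pow ⟨k * d, rfl⟩, one_mul]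

theorem taylorMatrix_neg_mul_tail (d k : ℕ) (t : ℂ) (a : Fin d) (s : Fin k) :
    (taylorMatrix d (-t) * Matrix.of fun (m : Fin d) (s : Fin k) => taylorEntry t m (d + s)) a s =
      (-1) ^ (d - 1 - a) * ((d - 1 - a + s).choose (d - 1 - a) : ℂ) *
        (t ^ (d - 1 - a + s + 1) / ((d - 1 - a + s + 1).factorial : ℂ)) := by
  obtain ⟨i, hi⟩ : ∃ i, d = (a : ℕ) + (i + 1) := ⟨d - a - 1, by omega⟩
  have hsum := sum_range_taylorEntry_neg_mul t a i (d + s)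
  rw [← hi, ← Fin.sum_univ_eq_sum_range
    (fun m => taylorEntry (-t) a m * taylorEntry t m (d + s)), if_neg (by omega),
    if_neg (by omega)] at hsum
  simp only [Matrix.mul_apply, taylorMatrix, Matrix.of_apply, hsum]
  rw [show d - 1 - a = i by omega, show d + s - a - 1 = i + s by omega,
    show d + s - a = i + s + 1 by omega]

theorem choose_mul_factorials_div_factorial_succ (i s : ℕ) :
    ((i + s).choose i : ℂ) * (i.factorial : ℂ) * (s.factorial : ℂ) / ((i + s + 1).factorial : ℂ) =
      1 / ((i + s + 1 : ℕ) : ℂ) := by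
  have hfac : ((i + s).choose i : ℂ) * (i.factorial : ℂ) * (s.factorial : ℂ) =
      ((i + s).factorial : ℂ) := by
    rw [Nat.choose_symm_add]
    exact_mod_cast Nat.add_choose_mul_factorial_mul_factorial i s
  have h0 : ((i + s).factorial : ℂ) ≠ 0 := by exact_mod_cast Nat.factorial_ne_zero _
  rw [hfac, Nat.factorial_succ, Nat.cast_mul]
  field_simp

/-- The Schur complement of the unipotent block evaluates to the bidiagonal determinant. -/
theorem det_fromBlocks_osculating (k d : ℕ) (f₀ t : ℂ) (g h : ℕ → ℂ) (hh : h k = 1)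
    (hnz : ∀ j < k, h j ≠ 0) :
    (Matrix.fromBlocks
      (Matrix.of fun r s : Fin (k + 1) => if (r : ℕ) = 0 then
          (if (s : ℕ) = 0 then f₀ / h 0 else 0) else
        if (s : ℕ) + 1 = r then -((r : ℕ) : ℂ) else
          if (s : ℕ) = r then h ((r : ℕ) - 1) / h r else 0)
      (Matrix.of fun (r : Fin (k + 1)) (a : Fin d) => if (r : ℕ) = 0 then
          (-1 : ℂ) ^ (d - a) * ((d - 1 - a).factorial : ℂ) * g (d - 1 - a) else 0)
      (Matrix.of fun (m : Fin d) (s : Fin (k + 1)) => taylorEntry t m (d + s))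
      (taylorMatrix d t)).det =
    (∑ i ∈ Finset.range d, ∑ j ∈ Finset.range (k + 1),
      g i * h j / ((i + j + 1 : ℕ) : ℂ) * t ^ (i + j + 1)) + f₀ := by
  have hnz' : ∀ j ≤ k, h j ≠ 0 := fun j hj => by
    rcases hj.lt_or_eq with hj | rfl
    · exact hnz j hj
    · simp [hh]
  let _ : Invertible (taylorMatrix d t) :=
    ⟨taylorMatrix d (-t), taylorMatrix_neg_mul_self d t,
      mul_eq_one_comm.mp (taylorMatrix_neg_mul_self d t)⟩
  rw [Matrix.det_fromBlocks₂₂, det_taylorMatrix, one_mul, Matrix.mul_assoc]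
  have hinv : ⅟(taylorMatrix d t) = taylorMatrix d (-t) := rfl
  have hrow := det_bidiagonal_with_first_row k
    (fun s => (if s = 0 then f₀ / h 0 else 0) + ∑ i ∈ Finset.range d,
      g i * (((i + s).choose i : ℂ) * (i.factorial : ℂ) / ((i + s + 1).factorial : ℂ)) *
        t ^ (i + s + 1)) h hnz'
  have hrhs : (∑ i ∈ Finset.range d, ∑ j ∈ Finset.range (k + 1),
      g i * h j / ((i + j + 1 : ℕ) : ℂ) * t ^ (i + j + 1)) + f₀ =
      (∑ s ∈ Finset.range (k + 1), ((if s = 0 then f₀ / h 0 else 0) + ∑ i ∈ Finset.range d,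
        g i * (((i + s).choose i : ℂ) * (i.factorial : ℂ) / ((i + s + 1).factorial : ℂ)) *
          t ^ (i + s + 1)) * (s.factorial : ℂ) * h s) / h k := by
    simp only [hh, div_one, add_mul, Finset.sum_add_distrib]
    rw [add_comm, Finset.sum_comm]
    congr 1
    · rw [Finset.sum_eq_single 0 (by intro s _ hs; simp [hs]) (by simp)]
      simp [hnz' 0 (Nat.zero_le k)]
    · refine Finset.sum_congr rfl fun s _ => ?_
      simp only [Finset.sum_mul]
      refine Finset.sum_congr rfl fun i _ => ?_
      rw [mul_div_assoc, div_eq_mul_one_div (h s),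
        ← choose_mul_factorials_div_factorial_succ i s]
      ring
  rw [hrhs, ← hrow]
  congr 1
  ext r s
  rw [Matrix.sub_apply, hinv, Matrix.mul_apply]
  simp only [taylorMatrix_neg_mul_tail, Matrix.of_apply]
  by_cases hr : (r : ℕ) = 0
  · simp only [hr, if_true]
    rw [sub_eq_add_neg, ← Finset.sum_neg_distrib]
    congr 1
    rw [← Finset.sum_range_reflect, ← Fin.sum_univ_eq_sum_range
      (fun a => g (d - 1 - a) * (((d - 1 - a + s).choose (d - 1 - a) : ℂ) *
        ((d - 1 - a).factorial : ℂ) / ((d - 1 - a + s + 1).factorial : ℂ)) *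
          t ^ (d - 1 - a + s + 1))]
    refine Finset.sum_congr rfl fun a _ => ?_
    rw [show d - (a : ℕ) = d - 1 - a + 1 by omega, pow_succ]
    have hsq : ((-1 : ℂ) ^ (d - 1 - (a : ℕ))) * (-1) ^ (d - 1 - (a : ℕ)) = 1 := by
      rw [← mul_pow]
      simp
    linear_combination (((d - 1 - (a : ℕ)).factorial : ℂ) * g (d - 1 - a) *
      ((d - 1 - (a : ℕ) + s).choose (d - 1 - a) : ℂ) *
        (t ^ (d - 1 - (a : ℕ) + s + 1) / ((d - 1 - (a : ℕ) + s + 1).factorial : ℂ))) * hsq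
  · simp [hr]

theorem det_osculating_of_add (k d n : ℕ) (hn : k + 1 + d = n) (f₀ t : ℂ) (g h : ℕ → ℂ)
    (hh : h k = 1) (hnz : ∀ j < k, h j ≠ 0) :
    Matrix.det
      ((Matrix.fromRows
          (Matrix.of fun (r : Fin (k + 1)) (j : Fin n) =>
            if (r : ℕ) = 0 then
              (if (j : ℕ) < d then
                  (-1 : ℂ) ^ (d - (j : ℕ)) * ((Nat.factorial (d - 1 - (j : ℕ))) : ℂ) *
                    g (d - 1 - (j : ℕ))
                else if (j : ℕ) = d then f₀ / h 0 else 0)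
            else
              (if (j : ℕ) = d + (r : ℕ) - 1 then -((r : ℕ) : ℂ)
                else if (j : ℕ) = d + (r : ℕ) then h ((r : ℕ) - 1) / h (r : ℕ)
                else 0))
          (Matrix.of fun (m : Fin d) (j : Fin n) => gammaVec n (m : ℕ) t j)).submatrix
        (⇑(finSumFinEquiv.trans (finCongr hn)).symm) id)
    = (-1 : ℂ) ^ ((k + 1) * d) *
        ((∑ i ∈ Finset.range d, ∑ j ∈ Finset.range (k + 1),
            g i * h j / ((i + j + 1 : ℕ) : ℂ) * t ^ (i + j + 1)) + f₀) := by
  subst hn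
  rw [← det_fromBlocks_osculating k d f₀ t g h hh hnz]
  refine (det_eq_neg_one_pow_mul_det_fromBlocks (k + 1) d _).trans ?_
  congr 3
  · ext r s
    simp only [Matrix.fromRows_apply_inl, Matrix.of_apply]
    by_cases hr : (r : ℕ) = 0
    · simp [hr]
    · have h₁ : d + (s : ℕ) = d + r - 1 ↔ (s : ℕ) + 1 = r := by omega
      simp only [hr, if_false, h₁, Nat.add_left_cancel_iff]
  · ext r a
    simp only [Matrix.fromRows_apply_inl, Matrix.of_apply, a.isLt, if_true]
    split_ifs <;> first | rfl | omega
  · ext m s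
    simp [gammaVec_eq_taylorEntry]
  · ext m a
    simp [gammaVec_eq_taylorEntry, taylorMatrix]

/-- **Lemma 4 (the determinant computation).** With `A` the explicit `k × n` matrix
parameterizing the Schubert cell of `X_□(∞)` (first row
`(c₁ g_{n−k−1}, …, c_{n−k} g₀, f₀/h₀, 0, …, 0)` with `c_m = (−1)^{n−k−m+1}(n−k−m)!`,
and row `i` for `2 ≤ i ≤ k` having `−(i−1)` in column `n−k+i−1` and `h_{i−2}/h_{i−1}`
in column `n−k+i`), and `B(t)` the `(n−k) × n` matrix whose `m`-th row is
`γ^{(m−1)}(t)`, the determinant of the stacked `n × n` matrix equals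
`(−1)^{k(n−k)} ( Σ_{i<n−k} Σ_{j<k} (g_i h_j/(i+j+1)) t^{i+j+1} + f₀ )`. -/
theorem det_osculating_condition (k n : ℕ) (hk : 1 ≤ k) (hkn : k < n)
    (f₀ : ℂ) (g h : ℕ → ℂ)
    (hg : g (n - k - 1) = 1) (hh : h (k - 1) = 1)
    (hhnz : ∀ j, j < k - 1 → h j ≠ 0) :
    ∀ t : ℂ,
      Matrix.det
        ((Matrix.fromRows
            (Matrix.of fun (r : Fin k) (j : Fin n) =>
              if (r : ℕ) = 0 then
                (if (j : ℕ) < n - k then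
                    (-1 : ℂ) ^ (n - k - (j : ℕ)) *
                      ((Nat.factorial (n - k - 1 - (j : ℕ))) : ℂ) *
                      g (n - k - 1 - (j : ℕ))
                  else if (j : ℕ) = n - k then f₀ / h 0 else 0)
              else
                (if (j : ℕ) = n - k + (r : ℕ) - 1 then -((r : ℕ) : ℂ)
                  else if (j : ℕ) = n - k + (r : ℕ) then h ((r : ℕ) - 1) / h (r : ℕ)
                  else 0))
            (Matrix.of fun (m : Fin (n - k)) (j : Fin n) => gammaVec n (m : ℕ) t j)).submatrix
          (⇑(finSumFinEquiv.trans (finCongr (Nat.add_sub_cancel' hkn.le))).symm) id)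
      = (-1 : ℂ) ^ (k * (n - k)) *
          ((∑ i ∈ Finset.range (n - k), ∑ j ∈ Finset.range k,
              g i * h j / ((i + j + 1 : ℕ) : ℂ) * t ^ (i + j + 1)) + f₀) := by
  intro t
  obtain ⟨k, rfl⟩ : ∃ k', k = k' + 1 := ⟨k - 1, by omega⟩
  exact det_osculating_of_add k (n - (k + 1)) n _ f₀ t g h hh hhnz
end
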